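/- arXiv:1210.3997 — 3 statements merged into one kernel-verified Lean document; each statement's English description precedes it below -/
import Mathlib

section
/- Let L/K be a totally ramified Galois extension of degree p of complete discrete valued fields of characteristic p, with σ a generator of Gal(L/K). Define F(x) = G(x, σ(x), …, σ^{p−1}(x)), where G ∈ ℤ[X_1, …, X_p] is the integral polynomial with p·G = (ΣX_i)^p − ΣX_i^p. Then for every nonzero x ∈ O_L, F(x) lies in K and v_K(F(x)) = v_L(x). -/
/-!
Common background: complete discretely valued fields, their valuation rings,
residue fields, Galois action on the valuation ring, truncated Witt vector
functoriality, and ramification breaks.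
-/

noncomputable section

open scoped Classical

/-- A field equipped with a normalized (i.e. surjective onto `ℤ`) discrete additive
valuation `v : K → WithTop ℤ` with respect to which it is complete. -/
structure CompleteDiscreteValuation (K : Type*) [Field K] where
  v : K → WithTop ℤ
  eq_top_iff : ∀ x : K, v x = ⊤ ↔ x = 0
  map_one : v 1 = 0
  map_mul : ∀ x y : K, v (x * y) = v x + v y
  min_le_add : ∀ x y : K, min (v x) (v y) ≤ v (x + y)
  surjective : ∀ n : ℤ, ∃ x : K, v x = (n : WithTop ℤ)
  complete : ∀ x : ℕ → K,
      (∀ n : ℕ, ((n : ℤ) : WithTop ℤ) ≤ v (x (n + 1) - x n)) →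
      ∃ y : K, ∀ n : ℕ, ((n : ℤ) : WithTop ℤ) ≤ v (y - x n)

namespace TruncatedWittVector

variable {p n : ℕ} [hp : Fact p.Prime] {R S : Type*} [CommRing R] [CommRing S]

lemma truncateFun_congr_map (f : R →+* S) (a b : WittVector p R)
    (h : WittVector.truncateFun n a = WittVector.truncateFun n b) :
    WittVector.truncateFun n (WittVector.map f a) =
      WittVector.truncateFun n (WittVector.map f b) := by
  ext i
  have hc := congrArg (fun z => TruncatedWittVector.coeff i z) h
  simp only [WittVector.coeff_truncateFun] at hc ⊢
  rw [WittVector.map_coeff, WittVector.map_coeff, hc]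

/-- Functoriality of truncated Witt vectors: the ring homomorphism
`W_n(R) → W_n(S)` induced by `f : R → S`, acting componentwise. -/
def map (f : R →+* S) : TruncatedWittVector p n R →+* TruncatedWittVector p n S where
  toFun x := WittVector.truncateFun n (WittVector.map f x.out)
  map_one' := by
    show WittVector.truncateFun n (WittVector.map f (1 : TruncatedWittVector p n R).out) = 1
    have h : WittVector.truncateFun n ((1 : TruncatedWittVector p n R)).out =
        WittVector.truncateFun n (1 : WittVector p R) := by
      rw [truncateFun_out, WittVector.truncateFun_one]
    have := truncateFun_congr_map f _ _ h
    rw [this, map_one, WittVector.truncateFun_one]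
  map_mul' x y := by
    show WittVector.truncateFun n (WittVector.map f (x * y).out) =
      WittVector.truncateFun n (WittVector.map f x.out) *
        WittVector.truncateFun n (WittVector.map f y.out)
    have h : WittVector.truncateFun n (x * y).out =
        WittVector.truncateFun n (x.out * y.out) := by
      rw [truncateFun_out, WittVector.truncateFun_mul, truncateFun_out, truncateFun_out]
    have := truncateFun_congr_map f _ _ h
    rw [this, map_mul, WittVector.truncateFun_mul]
  map_zero' := by
    show WittVector.truncateFun n (WittVector.map f (0 : TruncatedWittVector p n R).out) = 0
    have h : WittVector.truncateFun n ((0 : TruncatedWittVector p n R)).out =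
        WittVector.truncateFun n (0 : WittVector p R) := by
      rw [truncateFun_out, WittVector.truncateFun_zero]
    have := truncateFun_congr_map f _ _ h
    rw [this, map_zero, WittVector.truncateFun_zero]
  map_add' x y := by
    show WittVector.truncateFun n (WittVector.map f (x + y).out) =
      WittVector.truncateFun n (WittVector.map f x.out) +
        WittVector.truncateFun n (WittVector.map f y.out)
    have h : WittVector.truncateFun n (x + y).out =
        WittVector.truncateFun n (x.out + y.out) := by
      rw [truncateFun_out, WittVector.truncateFun_add, truncateFun_out, truncateFun_out]
    have := truncateFun_congr_map f _ _ h
    rw [this, map_add, WittVector.truncateFun_add]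

@[simp]
lemma map_coeff (f : R →+* S) (x : TruncatedWittVector p n R) (i : Fin n) :
    (map f x).coeff i = f (x.coeff i) := by
  show (WittVector.truncateFun n (WittVector.map f x.out)).coeff i = f (x.coeff i)
  rw [WittVector.coeff_truncateFun, WittVector.map_coeff, coeff_out]

end TruncatedWittVector

namespace CompleteDiscreteValuation

variable {K : Type*} [Field K]

lemma v_zero (w : CompleteDiscreteValuation K) : w.v 0 = ⊤ := (w.eq_top_iff 0).2 rfl

lemma v_neg_one (w : CompleteDiscreteValuation K) : w.v (-1) = 0 := by
  have h := w.map_mul (-1) (-1)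
  rw [neg_mul_neg, one_mul, w.map_one] at h
  cases h' : w.v (-1) with
  | top =>
      exact absurd ((w.eq_top_iff (-1)).1 h') (by norm_num)
  | coe a =>
      rw [h'] at h
      have ha : a + a = 0 := by exact_mod_cast h.symm
      have : a = 0 := by omega
      rw [this]
      rfl

lemma v_neg (w : CompleteDiscreteValuation K) (x : K) : w.v (-x) = w.v x := by
  rw [show -x = -1 * x by ring, w.map_mul, w.v_neg_one, zero_add]

/-- The valuation ring (ring of integers) of a complete discretely valued field. -/
def integers (w : CompleteDiscreteValuation K) : Subring K where
  carrier := {x : K | 0 ≤ w.v x}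
  zero_mem' := by simp [Set.mem_setOf_eq, v_zero]
  one_mem' := by simp [Set.mem_setOf_eq, w.map_one]
  add_mem' {a b} ha hb := le_trans (le_min ha hb) (w.min_le_add a b)
  mul_mem' {a b} ha hb := by
    simp only [Set.mem_setOf_eq] at *
    rw [w.map_mul]
    exact add_nonneg ha hb
  neg_mem' {a} ha := by
    simp only [Set.mem_setOf_eq] at *
    rwa [w.v_neg]

lemma mem_integers_iff (w : CompleteDiscreteValuation K) (x : K) :
    x ∈ w.integers ↔ 0 ≤ w.v x := Iff.rfl

/-- The maximal ideal of the valuation ring. -/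
def maxIdeal (w : CompleteDiscreteValuation K) : Ideal w.integers where
  carrier := {x | 0 < w.v (x : K)}
  zero_mem' := by simp [Set.mem_setOf_eq, v_zero]
  add_mem' {a b} ha hb := lt_of_lt_of_le (lt_min ha hb) (w.min_le_add (a : K) (b : K))
  smul_mem' c x hx := by
    simp only [Set.mem_setOf_eq] at *
    show 0 < w.v ((c : K) * (x : K))
    rw [w.map_mul]
    exact lt_of_lt_of_le hx (le_add_of_nonneg_left c.2)

/-- The residue field of a complete discretely valued field. -/
abbrev residueField (w : CompleteDiscreteValuation K) := w.integers ⧸ w.maxIdeal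

section Extension

variable {L : Type*} [Field L] [Algebra K L]

/-- The ring homomorphism between valuation rings induced by the inclusion `K ⟶ L`,
when the valuation of `L` restricts to `e` times the valuation of `K`. -/
def integerMap (wK : CompleteDiscreteValuation K) (wL : CompleteDiscreteValuation L)
    (e : ℕ) (hcomp : ∀ x : K, wL.v (algebraMap K L x) = e • wK.v x) :
    wK.integers →+* wL.integers where
  toFun x := ⟨algebraMap K L x, by
    rw [mem_integers_iff, hcomp]
    exact nsmul_nonneg x.2 e⟩
  map_one' := Subtype.ext (by simp)
  map_mul' x y := Subtype.ext (by simp)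
  map_zero' := Subtype.ext (by simp)
  map_add' x y := Subtype.ext (by simp)

/-- The induced homomorphism between the residue fields. -/
def residueMap (wK : CompleteDiscreteValuation K) (wL : CompleteDiscreteValuation L)
    (e : ℕ) (he : 0 < e) (hcomp : ∀ x : K, wL.v (algebraMap K L x) = e • wK.v x) :
    wK.residueField →+* wL.residueField :=
  Ideal.Quotient.lift wK.maxIdeal
    ((Ideal.Quotient.mk wL.maxIdeal).comp (integerMap wK wL e hcomp))
    (by
      intro a ha
      rw [RingHom.comp_apply, Ideal.Quotient.eq_zero_iff_mem]
      show 0 < wL.v (algebraMap K L (a : K))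
      rw [hcomp]
      calc (0 : WithTop ℤ) < wK.v (a : K) := ha
        _ = 1 • wK.v (a : K) := (one_nsmul _).symm
        _ ≤ e • wK.v (a : K) := nsmul_le_nsmul_left (le_of_lt ha) he)

/-- The induced extension of residue fields `k_L / k_K` is separable. -/
def ResidueSeparable (wK : CompleteDiscreteValuation K) (wL : CompleteDiscreteValuation L)
    (e : ℕ) (he : 0 < e) (hcomp : ∀ x : K, wL.v (algebraMap K L x) = e • wK.v x) : Prop :=
  letI : Algebra wK.residueField wL.residueField := (residueMap wK wL e he hcomp).toAlgebra
  Algebra.IsSeparable wK.residueField wL.residueField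

/-- A `K`-algebra automorphism of `L` (necessarily preserving the valuation, which is
recorded in the hypothesis `hGal`) restricts to a ring homomorphism of the valuation
ring `O_L`.  This is the Galois action on `O_L`. -/
def galRes (wL : CompleteDiscreteValuation L)
    (hGal : ∀ (σ : L ≃ₐ[K] L) (x : L), wL.v (σ x) = wL.v x) (σ : L ≃ₐ[K] L) :
    wL.integers →+* wL.integers where
  toFun x := ⟨σ x, by rw [mem_integers_iff, hGal]; exact x.2⟩
  map_one' := Subtype.ext (by simp)
  map_mul' x y := Subtype.ext (by simp)
  map_zero' := Subtype.ext (by simp)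
  map_add' x y := Subtype.ext (by simp)

/-- The statement that the action of the Galois group of `L/K` on `O_L/m_L^{s+1}`
is faithful: every nontrivial automorphism moves some integer of `L` by an element
of valuation at most `s`. -/
def FaithfulOnQuotient (K : Type*) [Field K] {L : Type*} [Field L] [Algebra K L]
    (wL : CompleteDiscreteValuation L) (s : ℕ) : Prop :=
  ∀ σ : L ≃ₐ[K] L, σ ≠ 1 → ∃ x : L, 0 ≤ wL.v x ∧ wL.v (σ x - x) ≤ ((s : ℤ) : WithTop ℤ)

/-- `s` is the ramification break (lower ramification jump) of `L/K`: the smallest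
nonnegative integer such that the induced action of `Gal(L/K)` on `O_L/m_L^{s+1}`
is faithful. -/
def IsRamificationBreak (K : Type*) [Field K] {L : Type*} [Field L] [Algebra K L]
    (wL : CompleteDiscreteValuation L) (s : ℕ) : Prop :=
  FaithfulOnQuotient K wL s ∧ ∀ t : ℕ, t < s → ¬ FaithfulOnQuotient K wL t

end Extension

end CompleteDiscreteValuation

open CompleteDiscreteValuation

/-!
As the degree equals the ramification index, a uniformizer `π` of `L` gives a `K`-basis
`1, π, …, π ^ (p - 1)`, and the terms of an expansion `∑ aᵢ πⁱ` have distinct valuations, so the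
valuation of the sum is the least of theirs. Expanding `π ^ p` shows that conjugates of `π` have
positive valuation, hence that `v_L` is Galois invariant. Moreover `v_L(x ^ p)` is divisible by `p`,
so `x ^ p` is close to an element of `K` and is moved only slightly by `τ ∈ Gal(L/K)`; in
characteristic `p` the displacement is `(τ x - x) ^ p`, so `v_L(τ x - x) > v_L(x)`. As `G` is
homogeneous of degree `p`, the value `G(x, σ x, …)` then agrees to leading order with
`G(x, …, x) = (p ^ (p - 1) - 1) x ^ p = -x ^ p`, which has valuation `p v_L(x)`. Finally
`G(x, σ x, …)` is fixed by `σ` because `G` is symmetric.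
-/

section Polynomial

variable {ι R S : Type*} [CommRing R] [CommRing S] [Algebra R S]

lemma aeval_const_mul_of_isHomogeneous {P : MvPolynomial ι R} {n : ℕ} (hP : P.IsHomogeneous n)
    (c : S) (f : ι → S) :
    MvPolynomial.aeval (fun i => c * f i) P = c ^ n * MvPolynomial.aeval f P := by
  simp only [MvPolynomial.aeval_def, MvPolynomial.eval₂_eq, Finset.mul_sum]
  refine Finset.sum_congr rfl fun d hd => ?_
  have hdeg : ∑ i ∈ d.support, d i = n := by
    simpa [Finsupp.weight_apply, Finsupp.sum] using hP (MvPolynomial.mem_support_iff.1 hd)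
  simp only [mul_pow, Finset.prod_mul_distrib, Finset.prod_pow_eq_pow_sum, hdeg]
  ring

lemma aeval_comp_perm_of_isSymmetric {P : MvPolynomial ι R} (hP : P.IsSymmetric)
    (f : ι → S) (e : Equiv.Perm ι) : MvPolynomial.aeval (f ∘ e) P = MvPolynomial.aeval f P := by
  rw [← MvPolynomial.aeval_rename, hP e]

end Polynomial

/-- `P` is the integral polynomial `((∑ Xᵢ) ^ n - ∑ Xᵢ ^ n) / n`, the division being expressed
by clearing the denominator. -/
def IsSumPowDefect {ι : Type*} [Fintype ι] (n : ℕ) (P : MvPolynomial ι ℤ) : Prop :=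
  (n : MvPolynomial ι ℤ) * P = (∑ i, MvPolynomial.X i) ^ n - ∑ i, MvPolynomial.X i ^ n

namespace IsSumPowDefect

variable {ι : Type*} [Fintype ι] {n : ℕ} {P : MvPolynomial ι ℤ}

lemma isSymmetric (hP : IsSumPowDefect n P) (hn : n ≠ 0) : P.IsSymmetric := fun e => by
  have hn' : (n : MvPolynomial ι ℤ) ≠ 0 := Nat.cast_ne_zero.2 hn
  have hrename := congrArg (MvPolynomial.rename e) hP
  simp only [_root_.map_mul, map_natCast, map_sub, map_pow, map_sum, MvPolynomial.rename_X,
    Equiv.sum_comp e fun i => (MvPolynomial.X i : MvPolynomial ι ℤ),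
    Equiv.sum_comp e fun i => (MvPolynomial.X i : MvPolynomial ι ℤ) ^ n] at hrename
  exact mul_left_cancel₀ hn' (hrename.trans hP.symm)

lemma isHomogeneous (hP : IsSumPowDefect n P) (hn : n ≠ 0) : P.IsHomogeneous n := by
  have hnP : ((n : MvPolynomial ι ℤ) * P).IsHomogeneous n := by
    rw [hP]
    refine .sub ?_ (.sum _ _ _ fun i _ => MvPolynomial.isHomogeneous_X_pow i n)
    simpa using (MvPolynomial.IsHomogeneous.sum Finset.univ _ 1
      fun i _ => MvPolynomial.isHomogeneous_X ℤ i).pow n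
  intro d hd
  refine hnP ?_
  rw [← nsmul_eq_mul, MvPolynomial.coeff_smul, nsmul_eq_mul]
  exact mul_ne_zero (Nat.cast_ne_zero.2 hn) hd

lemma aeval_one (hP : IsSumPowDefect n P) (hn : n ≠ 0) (hι : Fintype.card ι = n)
    (R : Type*) [CommRing R] :
    MvPolynomial.aeval (fun _ => (1 : R)) P = (n : R) ^ (n - 1) - 1 := by
  have hℤ : MvPolynomial.aeval (fun _ => (1 : ℤ)) P = (n : ℤ) ^ (n - 1) - 1 := by
    apply mul_left_cancel₀ (Nat.cast_ne_zero (R := ℤ).2 hn)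
    rw [mul_sub, mul_pow_sub_one hn]
    simpa [hι] using congrArg (MvPolynomial.aeval fun _ => (1 : ℤ)) hP
  simpa [Function.comp_def, hℤ] using
    MvPolynomial.aeval_algebraMap_apply R (fun _ => (1 : ℤ)) P

lemma aeval_const (hP : IsSumPowDefect n P) (hn : 1 < n) (hι : Fintype.card ι = n) {R : Type*}
    [CommRing R] [CharP R n] (x : R) : MvPolynomial.aeval (fun _ => x) P = -x ^ n := by
  have hn0 : n ≠ 0 := Nat.ne_zero_of_lt hn
  simpa [hP.aeval_one hn0 hι, zero_pow (Nat.sub_ne_zero_of_lt hn)] using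
    aeval_const_mul_of_isHomogeneous (hP.isHomogeneous hn0) x fun _ => 1

end IsSumPowDefect

section Galois

variable {K L R : Type*} [Field K] [Field L] [Algebra K L] [FiniteDimensional K L] [IsGalois K L]
  [CommRing R] [Algebra R K] [Algebra R L] [IsScalarTower R K L]

lemma exists_algebraMap_eq_aeval_pow_apply {n : ℕ} (hdeg : Module.finrank K L = n)
    {σ : L ≃ₐ[K] L} (hσ : ∀ τ : L ≃ₐ[K] L, τ ∈ Subgroup.zpowers σ)
    {P : MvPolynomial (Fin n) R} (hP : P.IsSymmetric) (x : L) :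
    ∃ y : K, algebraMap K L y = MvPolynomial.aeval (fun i : Fin n => (σ ^ (i : ℕ)) x) P := by
  set f : Fin n → L := fun i => (σ ^ (i : ℕ)) x with hf
  have : NeZero n := ⟨hdeg ▸ Module.finrank_pos.ne'⟩
  have hσn : σ ^ n = 1 := by
    rw [← hdeg, ← IsGalois.card_aut_eq_finrank, pow_card_eq_one']
  have hrotate : σ ∘ f = f ∘ Equiv.addRight 1 := by
    ext i
    have hi : ((i + 1 : Fin n) : ℕ) = ((i : ℕ) + 1) % n := by
      rw [Fin.val_add, Fin.val_one', Nat.add_mod_mod]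
    simp only [hf, Function.comp_apply, Equiv.coe_addRight, hi, ← pow_eq_pow_mod _ hσn, pow_succ',
      AlgEquiv.mul_apply]
  have hfixed : σ (MvPolynomial.aeval f P) = MvPolynomial.aeval f P := by
    have hmap : σ (MvPolynomial.aeval f P) = MvPolynomial.aeval (σ ∘ f) P :=
      MvPolynomial.comp_aeval_apply f ((σ : L →ₐ[K] L).restrictScalars R) P
    rw [hmap, hrotate, aeval_comp_perm_of_isSymmetric hP]
  have hle : Subgroup.zpowers σ ≤ MulAction.stabilizer (L ≃ₐ[K] L) (MvPolynomial.aeval f P) :=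
    (Subgroup.zpowers_le).2 hfixed
  exact (IsGalois.mem_range_algebraMap_iff_fixed _).2 fun τ => hle (hσ τ)

end Galois

section WithTop

lemma nsmul_top {Γ₀ : Type*} [LinearOrderedAddCommMonoidWithTop Γ₀] {n : ℕ} (hn : n ≠ 0) :
    n • (⊤ : Γ₀) = ⊤ := by
  obtain ⟨m, rfl⟩ := Nat.exists_eq_succ_of_ne_zero hn
  rw [succ_nsmul, add_top]

lemma lt_add_of_ne_top_of_pos {Γ₀ : Type*} [LinearOrderedAddCommMonoidWithTop Γ₀] {a b : Γ₀}
    (ha : a ≠ ⊤) (hb : 0 < b) : a < a + b := by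
  simpa using (add_lt_add_iff_right_of_ne_top ha).2 hb

lemma nsmul_right_injective_withTop_int {n : ℕ} (hn : n ≠ 0) :
    Function.Injective fun s : WithTop ℤ => n • s := by
  intro s t hst
  cases s <;> cases t <;>
    simp_all only [← WithTop.coe_nsmul, nsmul_top, ne_eq, not_false_eq_true, WithTop.coe_inj,
      WithTop.top_ne_coe, WithTop.coe_ne_top, smul_right_inj]

lemma eq_of_nsmul_add_natCast_eq {n i j : ℕ} {s t : WithTop ℤ} (hi : i < n) (hj : j < n)
    (hs : n • s + i ≠ ⊤) (h : n • s + i = n • t + j) : i = j := by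
  have hn : n ≠ 0 := by omega
  cases s with
  | top => simp [nsmul_top hn] at hs
  | coe s =>
    cases t with
    | top => simp [nsmul_top hn, h] at hs
    | coe t =>
      have hℤ : (n : ℤ) * s + i = n * t + j := by
        simpa using WithTop.coe_injective h
      have hmod := congrArg (· % (n : ℤ)) hℤ
      simp only [Int.mul_add_emod_self_left] at hmod
      rw [Int.emod_eq_of_lt, Int.emod_eq_of_lt] at hmod <;> omega

lemma pos_of_le_nsmul_add_natCast {n i : ℕ} {s : WithTop ℤ} (hi : i < n)
    (h : (n : WithTop ℤ) ≤ n • s + i) : 0 < s := by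
  cases s with
  | top => simp
  | coe s =>
    have hℤ : (n : ℤ) ≤ n * s + i := by
      simpa using WithTop.coe_le_coe.1 h
    have hs : 0 < s := by
      by_contra! hs
      nlinarith
    exact_mod_cast hs

lemma one_le_of_pos_withTop_int {s : WithTop ℤ} (hs : 0 < s) : 1 ≤ s := by
  cases s with
  | top => exact le_top
  | coe s => exact_mod_cast hs

end WithTop

section AddValuation

variable {ι Γ₀ : Type*}

lemma addValuation_sum_le_of_injOn {R : Type*} [Ring R] [LinearOrderedAddCommMonoidWithTop Γ₀]
    (v : AddValuation R Γ₀) {s : Finset ι} {f : ι → R}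
    (hf : Set.InjOn (fun i => v (f i)) {i ∈ s | v (f i) ≠ ⊤}) {j : ι} (hj : j ∈ s) :
    v (∑ i ∈ s, f i) ≤ v (f j) := by
  obtain ⟨k, hk, hmin⟩ := s.exists_min_image (fun i => v (f i)) ⟨j, hj⟩
  refine le_trans ?_ (hmin j hj)
  by_cases htop : v (f k) = ⊤
  · exact htop ▸ le_top
  have hlt : v (f k) < v (∑ i ∈ s.erase k, f i) := by
    refine v.map_lt_sum htop fun i hi => (hmin i (Finset.mem_of_mem_erase hi)).lt_of_ne fun h => ?_
    exact Finset.ne_of_mem_erase hi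
      (hf ⟨Finset.mem_of_mem_erase hi, h ▸ htop⟩ ⟨hk, htop⟩ h.symm)
  rw [← Finset.add_sum_erase _ _ hk, v.map_add_eq_of_lt_left hlt]

lemma addValuation_aeval_nonneg {R : Type*} [CommRing R] [LinearOrderedAddCommGroupWithTop Γ₀]
    (v : AddValuation R Γ₀) {f : ι → R} (hf : ∀ i, 0 ≤ v (f i)) (P : MvPolynomial ι ℤ) :
    0 ≤ v (MvPolynomial.aeval f P) := by
  have hmem : MvPolynomial.aeval f P ∈ (AddValuation.toValuation v).integer :=
    MvPolynomial.eval₂_mem (fun _ _ => intCast_mem _ _) hf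
  exact hmem

lemma addValuation_aeval_sub_aeval_pos {R : Type*} [CommRing R]
    [LinearOrderedAddCommGroupWithTop Γ₀] (v : AddValuation R Γ₀) {f g : ι → R}
    (hg : ∀ i, 0 ≤ v (g i)) (hfg : ∀ i, 0 < v (f i - g i)) (P : MvPolynomial ι ℤ) :
    0 < v (MvPolynomial.aeval f P - MvPolynomial.aeval g P) := by
  have hf (i : ι) : 0 ≤ v (f i) := by
    simpa using v.map_le_add (hfg i).le (hg i)
  induction P using MvPolynomial.induction_on with
  | C a => simp
  | add P Q hP hQ =>
    simpa only [map_add, add_sub_add_comm] using v.map_lt_add hP hQ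
  | mul_X P i hP =>
    have hsplit : MvPolynomial.aeval f (P * MvPolynomial.X i) -
        MvPolynomial.aeval g (P * MvPolynomial.X i) =
        (MvPolynomial.aeval f P - MvPolynomial.aeval g P) * f i +
          MvPolynomial.aeval g P * (f i - g i) := by
      simp only [_root_.map_mul, MvPolynomial.aeval_X]
      ring
    rw [hsplit]
    refine v.map_lt_add ?_ ?_ <;> rw [v.map_mul]
    · exact hP.trans_le (le_add_of_nonneg_right (hf i))
    · exact (hfg i).trans_le (le_add_of_nonneg_left (addValuation_aeval_nonneg v hg P))

lemma nsmul_lt_addValuation_aeval_sub_aeval_const {L : Type*} [Field L]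
    [LinearOrderedAddCommGroupWithTop Γ₀] (v : AddValuation L Γ₀) {n : ℕ}
    {P : MvPolynomial ι ℤ} (hP : P.IsHomogeneous n) {f : ι → L} {x : L} (hx : x ≠ 0)
    (hf : ∀ i, v x < v (f i - x)) :
    n • v x < v (MvPolynomial.aeval f P - MvPolynomial.aeval (fun _ => x) P) := by
  have hscale : MvPolynomial.aeval f P - MvPolynomial.aeval (fun _ => x) P = x ^ n *
      (MvPolynomial.aeval (fun i => f i / x) P - MvPolynomial.aeval (fun _ => (1 : L)) P) := by
    rw [mul_sub, ← aeval_const_mul_of_isHomogeneous hP, ← aeval_const_mul_of_isHomogeneous hP]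
    simp only [mul_div_cancel₀ _ hx, mul_one]
  have hpos : 0 < v (MvPolynomial.aeval (fun i => f i / x) P -
      MvPolynomial.aeval (fun _ => (1 : L)) P) := by
    refine addValuation_aeval_sub_aeval_pos v (by simp) (fun i => ?_) P
    rw [div_sub_one hx, v.map_div]
    exact LinearOrderedAddCommGroupWithTop.sub_pos.2 (.inl (hf i))
  have htop : n • v x ≠ ⊤ := by
    rw [← v.map_pow]
    exact v.ne_top_iff.2 (pow_ne_zero n hx)
  rw [hscale, v.map_mul, v.map_pow]
  exact lt_add_of_ne_top_of_pos htop hpos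

end AddValuation

/-- The extension `L/K` is totally ramified with respect to the discrete valuations `vK` and `vL`:
`vL` is normalized by `vL π = 1` for some `π`, and the ramification index of `vL` over `vK` is the
degree `[L : K]`. For infinite `L/K`, where `finrank` is `0`, this never holds. -/
structure IsTotallyRamified {K L : Type*} [Field K] [Field L] [Algebra K L]
    (vK : AddValuation K (WithTop ℤ)) (vL : AddValuation L (WithTop ℤ)) : Prop where
  map_algebraMap (a : K) : vL (algebraMap K L a) = Module.finrank K L • vK a
  exists_uniformizer : ∃ π : L, vL π = 1

namespace IsTotallyRamified

variable {K L : Type*} [Field K] [Field L] [Algebra K L]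
  {vK : AddValuation K (WithTop ℤ)} {vL : AddValuation L (WithTop ℤ)}

lemma finrank_pos (h : IsTotallyRamified vK vL) : 0 < Module.finrank K L := by
  refine Nat.pos_of_ne_zero fun h0 => ?_
  simpa [h0] using h.map_algebraMap 0

lemma finiteDimensional (h : IsTotallyRamified vK vL) : FiniteDimensional K L :=
  Module.finite_of_finrank_pos h.finrank_pos

lemma map_algebraMap_mul_pow (h : IsTotallyRamified vK vL) {π : L} (hπ : vL π = 1) (a : K)
    (i : ℕ) : vL (algebraMap K L a * π ^ i) = Module.finrank K L • vK a + i := by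
  rw [vL.map_mul, h.map_algebraMap, vL.map_pow, hπ, nsmul_one]

lemma map_sum_le (h : IsTotallyRamified vK vL) {π : L} (hπ : vL π = 1)
    (a : Fin (Module.finrank K L) → K) (j : Fin (Module.finrank K L)) :
    vL (∑ i, algebraMap K L (a i) * π ^ (i : ℕ)) ≤ vL (algebraMap K L (a j) * π ^ (j : ℕ)) := by
  refine addValuation_sum_le_of_injOn vL (fun i hi k _ hik => Fin.ext ?_) (Finset.mem_univ j)
  simp only [h.map_algebraMap_mul_pow hπ] at hi hik
  exact eq_of_nsmul_add_natCast_eq i.2 k.2 hi.2 hik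

lemma exists_eq_sum (h : IsTotallyRamified vK vL) {π : L} (hπ : vL π = 1) (x : L) :
    ∃ a : Fin (Module.finrank K L) → K, x = ∑ i, algebraMap K L (a i) * π ^ (i : ℕ) := by
  have := h.finiteDimensional
  have hπ0 : π ≠ 0 := by
    rintro rfl
    simp at hπ
  have hli : LinearIndependent K (fun i : Fin (Module.finrank K L) => π ^ (i : ℕ)) := by
    refine Fintype.linearIndependent_iff.2 fun a ha j => ?_
    simp only [Algebra.smul_def] at ha
    have hj := h.map_sum_le hπ a j
    rw [ha, vL.map_zero, top_le_iff, vL.top_iff] at hj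
    simpa [hπ0] using hj
  have hx : x ∈ Submodule.span K (Set.range fun i : Fin (Module.finrank K L) => π ^ (i : ℕ)) := by
    rw [hli.span_eq_top_of_card_eq_finrank' (by simp)]
    exact Submodule.mem_top
  obtain ⟨a, ha⟩ := (Submodule.mem_span_range_iff_exists_fun K).1 hx
  exact ⟨a, by simp only [← ha, Algebra.smul_def]⟩

lemma map_pos_of_map_eq_one (h : IsTotallyRamified vK vL) (τ : L →ₐ[K] L) {π : L}
    (hπ : vL π = 1) : 0 < vL (τ π) := by
  obtain ⟨a, ha⟩ := h.exists_eq_sum hπ (π ^ Module.finrank K L)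
  have ha_pos (i) : 0 < vL (algebraMap K L (a i)) := by
    have hi := h.map_sum_le hπ a i
    rw [← ha, h.map_algebraMap_mul_pow hπ, vL.map_pow, hπ, nsmul_one] at hi
    rw [h.map_algebraMap]
    exact nsmul_pos (pos_of_le_nsmul_add_natCast i.2 hi) h.finrank_pos.ne'
  by_contra! hτπ
  have hpow_top : Module.finrank K L • vL (τ π) ≠ ⊤ :=
    ((nsmul_nonpos hτπ _).trans_lt (by simp)).ne
  have hlt : vL (τ π ^ Module.finrank K L) < vL (∑ i, algebraMap K L (a i) * τ π ^ (i : ℕ)) := by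
    rw [vL.map_pow]
    refine vL.map_lt_sum hpow_top fun i _ => ?_
    rw [vL.map_mul, vL.map_pow]
    calc Module.finrank K L • vL (τ π)
        < Module.finrank K L • vL (τ π) + vL (algebraMap K L (a i)) :=
          lt_add_of_ne_top_of_pos hpow_top (ha_pos i)
      _ ≤ (i : ℕ) • vL (τ π) + vL (algebraMap K L (a i)) :=
          add_le_add_left (nsmul_le_nsmul_left_of_nonpos hτπ i.2.le) _
      _ = vL (algebraMap K L (a i)) + (i : ℕ) • vL (τ π) := add_comm _ _
  have hτ : τ π ^ Module.finrank K L = ∑ i, algebraMap K L (a i) * τ π ^ (i : ℕ) := by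
    simpa using congrArg τ ha
  exact hlt.ne (congrArg vL hτ)

lemma le_map_algHom (h : IsTotallyRamified vK vL) (τ : L →ₐ[K] L) (x : L) : vL x ≤ vL (τ x) := by
  obtain ⟨π, hπ⟩ := h.exists_uniformizer
  have hτπ : 1 ≤ vL (τ π) := one_le_of_pos_withTop_int (h.map_pos_of_map_eq_one τ hπ)
  obtain ⟨a, ha⟩ := h.exists_eq_sum hπ x
  have hτx : τ x = ∑ i, algebraMap K L (a i) * τ π ^ (i : ℕ) := by
    simpa using congrArg τ ha
  rw [hτx]
  refine vL.map_le_sum fun i _ => ?_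
  calc vL x ≤ vL (algebraMap K L (a i) * π ^ (i : ℕ)) := ha ▸ h.map_sum_le hπ a i
    _ ≤ vL (algebraMap K L (a i) * τ π ^ (i : ℕ)) := by
      rw [vL.map_mul, vL.map_mul, vL.map_pow, vL.map_pow, hπ]
      gcongr

lemma map_algEquiv (h : IsTotallyRamified vK vL) (τ : L ≃ₐ[K] L) (x : L) : vL (τ x) = vL x :=
  le_antisymm (by simpa using h.le_map_algHom τ.symm (τ x)) (h.le_map_algHom τ x)

lemma exists_lt_map_sub_algebraMap (h : IsTotallyRamified vK vL) {x : L} (hx : x ≠ 0)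
    {k : WithTop ℤ} (hk : vL x = Module.finrank K L • k) :
    ∃ b : K, vL x < vL (x - algebraMap K L b) := by
  have : NeZero (Module.finrank K L) := ⟨h.finrank_pos.ne'⟩
  obtain ⟨π, hπ⟩ := h.exists_uniformizer
  obtain ⟨a, ha⟩ := h.exists_eq_sum hπ x
  have hx_top : vL x ≠ ⊤ := vL.ne_top_iff.2 hx
  refine ⟨a 0, ?_⟩
  have htail : x - algebraMap K L (a 0) =
      ∑ i ∈ Finset.univ.erase 0, algebraMap K L (a i) * π ^ (i : ℕ) := by
    rw [sub_eq_iff_eq_add, ha, ← Finset.sum_erase_add _ _ (Finset.mem_univ 0)]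
    simp
  rw [htail]
  refine vL.map_lt_sum hx_top fun i hi => ?_
  refine (ha ▸ h.map_sum_le hπ a i).lt_of_ne fun heq => Finset.ne_of_mem_erase hi (Fin.ext ?_)
  rw [hk] at hx_top heq
  rw [h.map_algebraMap_mul_pow hπ] at heq
  exact (eq_of_nsmul_add_natCast_eq h.finrank_pos i.2 (by simpa using hx_top)
    (by simpa using heq)).symm

lemma lt_map_algEquiv_sub (h : IsTotallyRamified vK vL) {p : ℕ} (hp : p.Prime) [CharP K p]
    (hdeg : Module.finrank K L = p) (τ : L ≃ₐ[K] L) {x : L} (hx : x ≠ 0) :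
    vL x < vL (τ x - x) := by
  have := Fact.mk hp
  have : CharP L p := charP_of_injective_algebraMap (algebraMap K L).injective p
  obtain ⟨b, hb⟩ := h.exists_lt_map_sub_algebraMap (k := vL x) (pow_ne_zero p hx)
    (by rw [hdeg, vL.map_pow])
  have hfrob : (τ x - x) ^ p =
      τ (x ^ p - algebraMap K L b) - (x ^ p - algebraMap K L b) := by
    rw [sub_pow_char, map_sub, map_pow, AlgEquiv.commutes, sub_sub_sub_cancel_right]
  refine lt_of_nsmul_lt_nsmul_right p ?_
  calc p • vL x = vL (x ^ p) := (vL.map_pow x p).symm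
    _ < min (vL (τ (x ^ p - algebraMap K L b))) (vL (x ^ p - algebraMap K L b)) := by
      rw [h.map_algEquiv]
      exact lt_min hb hb
    _ ≤ vL ((τ x - x) ^ p) := hfrob ▸ vL.map_sub _ _
    _ = p • vL (τ x - x) := vL.map_pow _ p

end IsTotallyRamified

theorem valuation_of_F_general {p : ℕ} (hp : p.Prime) {K L : Type*} [Field K] [Field L]
    [Algebra K L] [CharP K p] [IsGalois K L] {vK : AddValuation K (WithTop ℤ)}
    {vL : AddValuation L (WithTop ℤ)} (h : IsTotallyRamified vK vL)
    (hdeg : Module.finrank K L = p) {σ : L ≃ₐ[K] L}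
    (hσ : ∀ τ : L ≃ₐ[K] L, τ ∈ Subgroup.zpowers σ) {G : MvPolynomial (Fin p) ℤ}
    (hG : IsSumPowDefect p G) {x : L} (hx : x ≠ 0) :
    ∃ y : K, algebraMap K L y = MvPolynomial.aeval (fun i : Fin p => (σ ^ (i : ℕ)) x) G ∧
      vK y = vL x := by
  have := h.finiteDimensional
  have : CharP L p := charP_of_injective_algebraMap (algebraMap K L).injective p
  obtain ⟨y, hy⟩ := exists_algebraMap_eq_aeval_pow_apply hdeg hσ (hG.isSymmetric hp.ne_zero) x
  refine ⟨y, hy, nsmul_right_injective_withTop_int hp.ne_zero ?_⟩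
  have hlead : vL (-x ^ p) = p • vL x := by rw [vL.map_neg, vL.map_pow]
  have hclose : p • vL x <
      vL (MvPolynomial.aeval (fun i : Fin p => (σ ^ (i : ℕ)) x) G - -x ^ p) := by
    rw [← hG.aeval_const hp.one_lt (Fintype.card_fin p) x]
    exact nsmul_lt_addValuation_aeval_sub_aeval_const vL (hG.isHomogeneous hp.ne_zero) hx
      fun i => h.lt_map_algEquiv_sub hp hdeg (σ ^ (i : ℕ)) hx
  calc p • vK y = vL (algebraMap K L y) := hdeg ▸ (h.map_algebraMap y).symm
    _ = vL (-x ^ p) := hy ▸ vL.map_eq_of_lt_sub (hlead ▸ hclose)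
    _ = p • vL x := hlead

/-- The additive valuation underlying a complete discrete valuation. -/
def CompleteDiscreteValuation.toAddValuation {K : Type*} [Field K]
    (w : CompleteDiscreteValuation K) : AddValuation K (WithTop ℤ) :=
  AddValuation.of w.v w.v_zero w.map_one w.min_le_add w.map_mul

/-- Let `L/K` be a totally ramified Galois extension of degree `p` of
complete discrete valued fields of characteristic `p` and let `σ` generate `Gal(L/K)`.
Let `G ∈ ℤ[X₁, …, X_p]` be the integral polynomial with
`p G = (Σ Xᵢ)^p - Σ Xᵢ^p`, and set `F(x) = G(x, σ(x), …, σ^{p-1}(x))`.  Then for every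
nonzero `x ∈ O_L`, `F(x)` lies in `K` and `v_K(F(x)) = v_L(x)`. -/
theorem valuation_of_F
    (p : ℕ) (hp : p.Prime)
    {K L : Type*} [Field K] [Field L] [Algebra K L] [CharP K p]
    (wK : CompleteDiscreteValuation K) (wL : CompleteDiscreteValuation L)
    [IsGalois K L] [FiniteDimensional K L] (hdeg : Module.finrank K L = p)
    (htot : ∀ x : K, wL.v (algebraMap K L x) = p • wK.v x)
    (σ : L ≃ₐ[K] L) (hσ : ∀ τ : L ≃ₐ[K] L, τ ∈ Subgroup.zpowers σ)
    (G : MvPolynomial (Fin p) ℤ)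
    (hG : (p : MvPolynomial (Fin p) ℤ) * G =
      (∑ i : Fin p, MvPolynomial.X i) ^ p - ∑ i : Fin p, MvPolynomial.X i ^ p) :
    ∀ x : L, x ∈ wL.integers → x ≠ 0 →
      ∃ y : K,
        algebraMap K L y = MvPolynomial.aeval (fun i : Fin p => (σ ^ (i : ℕ)) x) G ∧
        wK.v y = wL.v x := by
  intro x _ hx
  exact valuation_of_F_general hp (vK := wK.toAddValuation) (vL := wL.toAddValuation)
    ⟨hdeg.symm ▸ htot, wL.surjective 1⟩ hdeg hσ hG hx
end
end

section
/- Let L/K be a totally ramified Galois extension of degree p of complete discrete valued fields of characteristic p, with ramification break s ≥ 1. Then for every integer n ≥ 2 such that (s(p−1)/p)·(1 + 1/p + ⋯ + 1/p^{n−3}) > s − 1, every Witt vector (x_0, …, x_{n−1}) ∈ W_n(O_L) of trace zero satisfies v_L(x_0) ≥ s. -/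
/-!
Common background: complete discretely valued fields, their valuation rings,
residue fields, Galois action on the valuation ring, truncated Witt vector
functoriality, and ramification breaks.
-/

noncomputable section

open scoped Classical

open CompleteDiscreteValuation

/-!
For Witt vectors with indeterminate coefficients permuted by a group of order `p`, the component of
index `k + 1` of the trace is isobaric, invariant, and restricts to `X_k ^ p` on the diagonal. Hence
it is the norm of `X_k` plus a sum over orbits, and a Witt vector `x` of trace zero satisfies
`N(x_k) = -Tr(z)` with `v z ≥ min (v x_{k+1}) (p * min_{j ≤ k} v x_j)`.

Let `t = s - 1`. Since the extension is wildly ramified, `σ - 1` raises valuations by at least `t`,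
with equality on valuations prime to `p`, and `Tr = (σ - 1) ^ (p - 1)`. The displayed identity then
shows that the defects `d_k = max (t - v x_k) 0` satisfy `p * d_k ≤ d_{k+1} ≤ t`. Therefore
`p ^ (n - 1) * d_0 ≤ t < p ^ (n - 1)`, so `d_0 = 0`. Finally `v x_0 = t` is impossible: `t` is prime
to `p`, so `x_0` would have nonzero trace.
-/

namespace WittTrace

open MvPolynomial

section OrbitSums

variable {G M : Type*} [Group G] [MulAction G M]

lemma existsUnique_smul_eq_out (hG : (Nat.card G).Prime) {m : M} (hm : ∃ g : G, g • m ≠ m) :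
    ∃! g : G, g • m = (Quotient.mk (MulAction.orbitRel G M) m).out := by
  have : Fact (Nat.card G).Prime := ⟨hG⟩
  have hstab : MulAction.stabilizer G m = ⊥ :=
    (Subgroup.eq_bot_or_eq_top_of_prime_card _).resolve_right fun htop ↦
      hm.elim fun g hg ↦ hg (MulAction.mem_stabilizer_iff.1 (htop ▸ Subgroup.mem_top g))
  obtain ⟨g, hg⟩ := Quotient.mk_out (s := MulAction.orbitRel G M) m
  refine ⟨g, hg, fun g' hg' ↦ ?_⟩
  have hmem : g⁻¹ * g' ∈ MulAction.stabilizer G m := by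
    rw [MulAction.mem_stabilizer_iff, mul_smul, hg', ← hg, inv_smul_smul]
  rw [hstab, Subgroup.mem_bot, inv_mul_eq_one] at hmem
  exact hmem.symm

lemma exists_sum_smul_eq [Fintype G] {A : Type*} [AddCommMonoid A] (hG : (Nat.card G).Prime)
    (f : M →₀ A) (hf : ∀ (g : G) (m : M), f (g • m) = f m) :
    ∃ z : M →₀ A, z.support ⊆ f.support ∧
      ∀ m, (∃ g : G, g • m ≠ m) → ∑ g : G, z (g • m) = f m := by
  let rep (m : M) : M := (Quotient.mk (MulAction.orbitRel G M) m).out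
  refine ⟨f.filter fun m ↦ m = rep m, Finset.filter_subset _ _, fun m hm ↦ ?_⟩
  have hrep (g : G) : rep (g • m) = rep m := congrArg Quotient.out (Quotient.sound ⟨g, rfl⟩)
  obtain ⟨g₀, hg₀, huniq⟩ := existsUnique_smul_eq_out hG hm
  rw [Finset.sum_eq_single_of_mem g₀ (Finset.mem_univ _), Finsupp.filter_apply_pos, hf]
  · exact hg₀.trans (hrep g₀).symm
  · intro g _ hg
    exact Finsupp.filter_apply_neg _ _ fun h ↦ hg (huniq g (h.trans (hrep g)))

end OrbitSums

section InvariantPolynomials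

variable {ι G R : Type*}

attribute [local instance] Finsupp.comapMulAction Finsupp.comapSMul

lemma coeff_rename_smul [Group G] [CommSemiring R] (g : G) (P : MvPolynomial (Σ _ : ι, G) R)
    (m : (Σ _ : ι, G) →₀ ℕ) : coeff m (rename (g • ·) P) = coeff (g⁻¹ • m) P := by
  conv_lhs => rw [← smul_inv_smul g m]
  exact coeff_rename_mapDomain _ (MulAction.injective g) _ _

lemma mapDomain_fst_apply [Fintype G] (m : (Σ _ : ι, G) →₀ ℕ) (i : ι) :
    Finsupp.mapDomain Sigma.fst m i = ∑ g, m ⟨i, g⟩ := by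
  induction m using Finsupp.induction_linear with
  | zero => simp
  | add a b ha hb => simp [Finsupp.mapDomain_add, ha, hb, Finset.sum_add_distrib]
  | single j e =>
    obtain ⟨j, h⟩ := j
    by_cases hj : j = i
    · subst hj
      simp [Finsupp.single_apply]
    · simp [hj]

variable [Group G]

lemma injOn_mapDomain_fst [Finite G] :
    Set.InjOn (Finsupp.mapDomain Sigma.fst) {m : (Σ _ : ι, G) →₀ ℕ | ∀ g : G, g • m = m} := by
  have := Fintype.ofFinite G
  have hconst {m : (Σ _ : ι, G) →₀ ℕ} (hm : ∀ g : G, g • m = m) (i : ι) (g : G) :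
      m ⟨i, g⟩ = m ⟨i, 1⟩ := by
    conv_lhs => rw [← hm g, Finsupp.comapSMul_apply]
    simp
  have hsum {m : (Σ _ : ι, G) →₀ ℕ} (hm : ∀ g : G, g • m = m) (i : ι) :
      Finsupp.mapDomain Sigma.fst m i = Fintype.card G * m ⟨i, 1⟩ := by
    simp [mapDomain_fst_apply, hconst hm i]
  intro m hm m' hm' h
  ext ⟨i, g⟩
  rw [hconst hm, hconst hm']
  refine Nat.eq_of_mul_eq_mul_left (Fintype.card_pos (α := G)) ?_
  rw [← hsum hm, ← hsum hm', h]

lemma eq_zero_of_rename_fst_eq_zero [Finite G] [CommSemiring R] {P : MvPolynomial (Σ _ : ι, G) R}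
    (hfix : ∀ m ∈ P.support, ∀ g : G, g • m = m) (hP : rename Sigma.fst P = 0) : P = 0 := by
  ext m
  by_contra hne
  have hm := mem_support_iff.2 hne
  have hcoeff : coeff (Finsupp.mapDomain Sigma.fst m) (rename Sigma.fst P) = coeff m P := by
    conv_lhs => rw [P.as_sum, map_sum, coeff_sum]
    rw [Finset.sum_eq_single_of_mem m hm]
    · rw [rename_monomial, coeff_monomial, if_pos rfl]
    · intro m' hm' hmm'
      rw [rename_monomial, coeff_monomial,
        if_neg fun h ↦ hmm' (injOn_mapDomain_fst (hfix m' hm') (hfix m hm) h)]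
  exact hne (by rw [← hcoeff, hP, coeff_zero, coeff_zero])

lemma exists_eq_sum_rename_smul [Fintype G] [CommRing R] (hG : (Nat.card G).Prime)
    (hchar : (Nat.card G : R) = 0) {P : MvPolynomial (Σ _ : ι, G) R}
    (hinv : ∀ g : G, rename (g • ·) P = P) (hdiag : rename Sigma.fst P = 0) :
    ∃ Z : MvPolynomial (Σ _ : ι, G) R, Z.support ⊆ P.support ∧
      P = ∑ g : G, rename (g • ·) Z := by
  have hcoeff (g : G) (m) : coeff (g • m) P = coeff m P := by
    conv_rhs => rw [← hinv g⁻¹, coeff_rename_smul, inv_inv]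
  obtain ⟨Z, hZP, hZ⟩ : ∃ Z : MvPolynomial (Σ _ : ι, G) R, Z.support ⊆ P.support ∧
      ∀ m, (∃ g : G, g • m ≠ m) → ∑ g : G, coeff (g • m) Z = coeff m P :=
    (exists_sum_smul_eq hG (AddMonoidAlgebra.coeff P) hcoeff).imp' AddMonoidAlgebra.ofCoeff
      fun _ h ↦ h
  refine ⟨Z, hZP, sub_eq_zero.1 (eq_zero_of_rename_fst_eq_zero ?_ ?_)⟩
  · intro m hm
    by_contra! hmoved
    refine mem_support_iff.1 hm ?_
    simp only [coeff_sub, coeff_sum, coeff_rename_smul]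
    rw [← hZ m hmoved, sub_eq_zero]
    exact (Equiv.sum_comp (Equiv.inv G) fun g ↦ coeff (g • m) Z).symm
  · have hdiagZ (g : G) : rename Sigma.fst (rename (g • ·) Z) = rename Sigma.fst Z := by
      rw [rename_rename]; rfl
    have hcardZ : (Fintype.card G : MvPolynomial ι R) = 0 := by
      rw [← map_natCast C, ← Nat.card_eq_fintype_card, hchar, map_zero]
    simp only [map_sub, map_sum, hdiag, hdiagZ, Finset.sum_const, Finset.card_univ,
      nsmul_eq_mul, hcardZ, zero_mul, sub_zero]

end InvariantPolynomials

section WeightedHomogeneous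

variable {σ R : Type*} [CommSemiring R]

lemma aeval_X_pow_mul_C_monomial (w : σ → ℕ) (m : σ →₀ ℕ) (a : R) :
    aeval (fun i ↦ Polynomial.X ^ w i * Polynomial.C (X i : MvPolynomial σ R)) (monomial m a) =
      Polynomial.C (monomial m a) * Polynomial.X ^ Finsupp.weight w m := by
  rw [aeval_monomial, monomial_eq, Finsupp.weight_apply]
  simp only [mul_pow, Finset.prod_mul_distrib, _root_.map_mul, Finsupp.prod, Finsupp.sum, map_prod,
    map_pow, ← pow_mul, Finset.prod_pow_eq_pow_sum, smul_eq_mul, mul_comm (w _)]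
  rw [show algebraMap R (Polynomial (MvPolynomial σ R)) a = Polynomial.C (C a) from rfl]
  ring

lemma coeff_aeval_X_pow_mul_C (w : σ → ℕ) (P : MvPolynomial σ R) (d : ℕ) :
    (aeval (fun i ↦ Polynomial.X ^ w i * Polynomial.C (X i : MvPolynomial σ R)) P).coeff d =
      weightedHomogeneousComponent w d P := by
  induction P using MvPolynomial.induction_on' with
  | add P Q hP hQ => rw [map_add, map_add, Polynomial.coeff_add, hP, hQ]
  | monomial m a =>
    rw [aeval_X_pow_mul_C_monomial, Polynomial.coeff_C_mul_X_pow,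
      weightedHomogeneousComponent_of_mem (isWeightedHomogeneous_monomial w m a rfl)]

lemma isWeightedHomogeneous_of_aeval_eq {w : σ → ℕ} {P : MvPolynomial σ R} {d : ℕ}
    (h : aeval (fun i ↦ Polynomial.X ^ w i * Polynomial.C (X i : MvPolynomial σ R)) P =
      Polynomial.X ^ d * Polynomial.C P) : IsWeightedHomogeneous w P d := by
  have hP : weightedHomogeneousComponent w d P = P := by
    rw [← coeff_aeval_X_pow_mul_C, h, Polynomial.coeff_X_pow_mul', if_pos le_rfl,
      Nat.sub_self, Polynomial.coeff_C_zero]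
  exact hP ▸ weightedHomogeneousComponent_isWeightedHomogeneous d P

end WeightedHomogeneous

section TracePolynomial

variable (p : ℕ) [Fact p.Prime]

lemma teichmuller_mul_coeff {R : Type*} [CommRing R] [CharP R p] (k : ℕ) (T : R)
    (x : WittVector p R) :
    (WittVector.teichmuller p T * x).coeff k = T ^ p ^ k * x.coeff k := by
  have hdisj (a : R) (b : WittVector p R) (n : ℕ) :
      (WittVector.teichmuller p a).coeff n = 0 ∨ (WittVector.verschiebung b).coeff n = 0 := by
    cases n with
    | zero => exact .inr (WittVector.verschiebung_coeff_zero b)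
    | succ n => exact .inl (WittVector.teichmuller_coeff_pos p a _ n.succ_pos)
  induction k generalizing T x with
  | zero => simp [WittVector.mul_coeff_zero]
  | succ k ih =>
    let y : WittVector p R := WittVector.mk p fun n ↦ x.coeff (n + 1)
    have hx : x = WittVector.teichmuller p (x.coeff 0) + WittVector.verschiebung y := by
      ext n
      rw [WittVector.coeff_add_of_disjoint n _ _ (hdisj _ _)]
      cases n <;> simp [y]
    have hfrob : WittVector.frobenius (WittVector.teichmuller p T) =
        WittVector.teichmuller p (T ^ p) := by
      rw [WittVector.frobenius_eq_map_frobenius, WittVector.map_teichmuller, frobenius_def]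
    have hTx : WittVector.teichmuller p T * x = WittVector.teichmuller p (T * x.coeff 0) +
        WittVector.verschiebung (WittVector.teichmuller p (T ^ p) * y) := by
      conv_lhs => rw [hx]
      rw [mul_add, ← _root_.map_mul, ← hfrob, mul_comm _ y, WittVector.verschiebung_mul_frobenius,
        mul_comm _ (WittVector.verschiebung y)]
    rw [hTx, WittVector.coeff_add_of_disjoint _ _ _ (hdisj _ _),
      WittVector.teichmuller_coeff_pos p _ _ k.succ_pos, WittVector.verschiebung_coeff_succ,
      zero_add, ih, ← pow_mul, ← pow_succ']
    rfl

/-- The polynomial in the variables `X_{j,g}` giving the `k`-th coefficient of `∑ g, x^{(g)}` for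
Witt vectors `x^{(g)}` with coefficients `X_{0,g}, X_{1,g}, …`. -/
def tracePoly (G : Type*) [Fintype G] (k : ℕ) : MvPolynomial (Σ _ : ℕ, G) (ZMod p) :=
  (∑ g : G, WittVector.mk p (fun j ↦ (X ⟨j, g⟩ : MvPolynomial (Σ _ : ℕ, G) (ZMod p)))).coeff k

variable {G : Type*} [Fintype G]

lemma map_tracePoly {R : Type*} [CommRing R] (f : MvPolynomial (Σ _ : ℕ, G) (ZMod p) →+* R)
    (k : ℕ) :
    f (tracePoly p G k) = (∑ g : G, WittVector.mk p (fun j ↦ f (X ⟨j, g⟩))).coeff k := by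
  rw [tracePoly, ← WittVector.map_coeff, map_sum]
  rfl

lemma isWeightedHomogeneous_tracePoly (k : ℕ) :
    IsWeightedHomogeneous (fun i ↦ p ^ i.1) (tracePoly p G k) (p ^ k) := by
  refine isWeightedHomogeneous_of_aeval_eq ?_
  rw [← RingHom.coe_coe, map_tracePoly, map_tracePoly p Polynomial.C, ← teichmuller_mul_coeff,
    Finset.mul_sum]
  congr! 2 with g
  ext j
  simp [teichmuller_mul_coeff]

lemma rename_smul_tracePoly [Group G] (g : G) (k : ℕ) :
    rename (g • ·) (tracePoly p G k) = tracePoly p G k := by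
  rw [← RingHom.coe_coe, map_tracePoly, tracePoly]
  simp only [RingHom.coe_coe, rename_X, Sigma.smul_mk, smul_eq_mul]
  exact congrArg (WittVector.coeff · k) (Equiv.sum_comp (Equiv.mulLeft g) fun h ↦
    WittVector.mk p fun j ↦ (X ⟨j, h⟩ : MvPolynomial (Σ _ : ℕ, G) (ZMod p)))

lemma rename_fst_tracePoly_succ (hG : Nat.card G = p) (k : ℕ) :
    rename Sigma.fst (tracePoly p G (k + 1)) = (X k : MvPolynomial ℕ (ZMod p)) ^ p := by
  rw [← RingHom.coe_coe, map_tracePoly]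
  simp only [RingHom.coe_coe, rename_X, Finset.sum_const, Finset.card_univ,
    ← Nat.card_eq_fintype_card, hG, nsmul_eq_mul]
  rw [mul_comm, WittVector.mul_charP_coeff_succ, WittVector.coeff_mk]

lemma isWeightedHomogeneous_prod_X (hG : Nat.card G = p) (k : ℕ) :
    IsWeightedHomogeneous (fun i ↦ p ^ i.1)
      (∏ g : G, X ⟨k, g⟩ : MvPolynomial (Σ _ : ℕ, G) (ZMod p)) (p ^ (k + 1)) := by
  have hweight : p ^ (k + 1) = ∑ _g : G, p ^ k := by
    rw [Finset.sum_const, Finset.card_univ, ← Nat.card_eq_fintype_card, hG, smul_eq_mul, pow_succ']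
  rw [hweight]
  exact IsWeightedHomogeneous.prod _ _ _ fun g _ ↦ isWeightedHomogeneous_X _ _ _

lemma rename_smul_prod_X [Group G] (g : G) (k : ℕ) :
    rename (g • ·) (∏ h : G, X ⟨k, h⟩ : MvPolynomial (Σ _ : ℕ, G) (ZMod p)) =
      ∏ h : G, X ⟨k, h⟩ := by
  simp only [map_prod, rename_X, Sigma.smul_mk, smul_eq_mul]
  exact Equiv.prod_comp (Equiv.mulLeft g) fun h ↦
    (X ⟨k, h⟩ : MvPolynomial (Σ _ : ℕ, G) (ZMod p))

lemma exists_tracePoly_succ_eq [Group G] (hG : Nat.card G = p) (k : ℕ) :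
    ∃ Z : MvPolynomial (Σ _ : ℕ, G) (ZMod p),
      IsWeightedHomogeneous (fun i ↦ p ^ i.1) Z (p ^ (k + 1)) ∧
      tracePoly p G (k + 1) = ∏ g : G, X ⟨k, g⟩ + ∑ g : G, rename (g • ·) Z := by
  let P : MvPolynomial (Σ _ : ℕ, G) (ZMod p) := tracePoly p G (k + 1) - ∏ g : G, X ⟨k, g⟩
  have hhom : IsWeightedHomogeneous (fun i ↦ p ^ i.1) P (p ^ (k + 1)) :=
    (isWeightedHomogeneous_tracePoly p (k + 1)).sub (isWeightedHomogeneous_prod_X p hG k)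
  have hinv (g : G) : rename (g • ·) P = P := by
    rw [map_sub, rename_smul_tracePoly, rename_smul_prod_X]
  have hdiag : rename Sigma.fst P = 0 := by
    rw [map_sub, rename_fst_tracePoly_succ p hG, map_prod]
    simp only [rename_X, Finset.prod_const, Finset.card_univ, ← Nat.card_eq_fintype_card, hG,
      sub_self]
  obtain ⟨Z, hZP, hZ⟩ := exists_eq_sum_rename_smul (hG ▸ Fact.out)
    (by rw [hG, CharP.cast_eq_zero]) hinv hdiag
  exact ⟨Z, fun m hm ↦ hhom (mem_support_iff.1 (hZP (mem_support_iff.2 hm))),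
    sub_eq_iff_eq_add'.1 hZ⟩

end TracePolynomial

section Valuation

lemma eq_single_or_le_degree_of_weight_eq_pow {σ : Type*} {e : σ → ℕ} {p k : ℕ} (hp : 1 < p)
    {m : σ →₀ ℕ} (hm : Finsupp.weight (fun i ↦ p ^ e i) m = p ^ (k + 1)) :
    (∃ i, e i = k + 1 ∧ m = Finsupp.single i 1) ∨
      (∀ i ∈ m.support, e i ≤ k) ∧ p ≤ m.degree := by
  by_cases hlarge : ∃ i ∈ m.support, k + 1 ≤ e i
  · obtain ⟨i, hi, hki⟩ := hlarge
    obtain ⟨m', rfl⟩ := exists_add_of_le <| Finsupp.single_le_iff.2 <|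
      Nat.one_le_iff_ne_zero.2 (Finsupp.mem_support_iff.1 hi)
    rw [map_add, Finsupp.weight_single, one_smul] at hm
    have hpow : p ^ (k + 1) ≤ p ^ e i := Nat.pow_le_pow_right hp.le hki
    have : Finsupp.NonTorsionWeight ℕ fun i ↦ p ^ e i :=
      Finsupp.nonTorsionWeight_of _ _ fun j ↦ (pow_pos (zero_lt_one.trans hp) (e j)).ne'
    have hm' : m' = 0 := (Finsupp.weight_eq_zero_iff_eq_zero fun i ↦ p ^ e i).1 (by lia)
    refine .inl ⟨i, Nat.pow_right_injective hp (by simp_all), by rw [hm', add_zero]⟩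
  · simp only [not_exists, not_and, not_le, Nat.lt_succ_iff] at hlarge
    refine .inr ⟨hlarge, Nat.le_of_mul_le_mul_right (?_ : p * p ^ k ≤ m.degree * p ^ k)
      (pow_pos (zero_lt_one.trans hp) k)⟩
    rw [← pow_succ', ← hm, Finsupp.weight_apply, Finsupp.sum, Finsupp.degree_apply,
      Finset.sum_mul]
    exact Finset.sum_le_sum fun i hi ↦
      Nat.mul_le_mul_left _ (Nat.pow_le_pow_right hp.le (hlarge i hi))

variable {R Γ₀ : Type*} [CommRing R] [LinearOrderedAddCommMonoidWithTop Γ₀]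
  (v : AddValuation R Γ₀)

lemma map_intCast_nonneg (n : ℤ) : 0 ≤ v (n : R) := by
  have hnat (m : ℕ) : 0 ≤ v (m : R) := by
    induction m with
    | zero => simp
    | succ m ih => exact Nat.cast_succ (R := R) m ▸ v.map_le_add ih v.map_one.ge
  obtain ⟨m, rfl | rfl⟩ := n.eq_nat_or_neg
  · exact Int.cast_natCast (R := R) m ▸ hnat m
  · rw [Int.cast_neg, v.map_neg, Int.cast_natCast]
    exact hnat m

lemma map_intCast_eq_zero {p : ℕ} [Fact p.Prime] [CharP R p] {m : ℤ} (hm : ¬(p : ℤ) ∣ m) :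
    v (m : R) = 0 := by
  obtain ⟨a, b, hab⟩ : IsCoprime (p : ℤ) m :=
    (Nat.prime_iff_prime_int.1 Fact.out).coprime_iff_not_dvd.2 hm
  have hbm : v (b : R) + v (m : R) = 0 := by
    rw [← v.map_mul, ← v.map_one]
    simpa using congrArg (fun n : ℤ ↦ v (n : R)) hab
  exact ((add_eq_zero_iff_of_nonneg (map_intCast_nonneg v b) (map_intCast_nonneg v m)).1 hbm).2

lemma map_prod_eq_sum {ι : Type*} (s : Finset ι) (f : ι → R) :
    v (∏ i ∈ s, f i) = ∑ i ∈ s, v (f i) := by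
  induction s using Finset.induction_on with
  | empty => simp
  | insert a s ha ih => rw [Finset.prod_insert ha, Finset.sum_insert ha, v.map_mul, ih]

lemma le_map_of_isWeightedHomogeneous {p k : ℕ} [Fact p.Prime] {σ : Type*} {e : σ → ℕ}
    {Z : MvPolynomial σ (ZMod p)} (hZ : IsWeightedHomogeneous (fun i ↦ p ^ e i) Z (p ^ (k + 1)))
    (f : MvPolynomial σ (ZMod p) →+* R) {b c : Γ₀} (hc : 0 ≤ c)
    (hfc : ∀ i, e i ≤ k → c ≤ v (f (X i))) (hfb : ∀ i, e i = k + 1 → b ≤ v (f (X i))) :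
    min b (p • c) ≤ v (f Z) := by
  rw [Z.as_sum, map_sum]
  refine v.map_le_sum fun m hm ↦ ?_
  have hsum : v (f (monomial m (coeff m Z))) = v (f (C (coeff m Z))) +
      ∑ i ∈ m.support, m i • v (f (X i)) := by
    rw [monomial_eq, _root_.map_mul, v.map_mul, Finsupp.prod, map_prod, map_prod_eq_sum]
    simp only [map_pow, v.map_pow]
  have hcoeff : 0 ≤ v (f (C (coeff m Z))) := by
    obtain ⟨n, hn⟩ := ZMod.intCast_surjective (coeff m Z)
    rw [← hn, map_intCast, map_intCast]
    exact map_intCast_nonneg v n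
  rw [hsum]
  refine le_add_of_nonneg_of_le hcoeff ?_
  rcases eq_single_or_le_degree_of_weight_eq_pow (Fact.out : p.Prime).one_lt
    (hZ (mem_support_iff.1 hm)) with ⟨i, hi, rfl⟩ | ⟨hk, hdeg⟩
  · simpa using .inl (hfb i hi)
  · calc min b (p • c) ≤ p • c := min_le_right _ _
      _ ≤ m.degree • c := nsmul_le_nsmul_left hc hdeg
      _ = ∑ i ∈ m.support, m i • c := by rw [Finsupp.degree_apply, Finset.sum_smul]
      _ ≤ ∑ i ∈ m.support, m i • v (f (X i)) :=
        Finset.sum_le_sum fun i hi ↦ nsmul_le_nsmul_right (hfc i (hk i hi)) _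

lemma exists_prod_smul_eq_neg_sum_smul {p : ℕ} [Fact p.Prime] [CharP R p] {G : Type*} [Group G]
    [Fintype G] [MulSemiringAction G R] (hG : Nat.card G = p)
    (hv : ∀ (g : G) (a : R), v (g • a) = v a) {x : WittVector p R} {k : ℕ}
    (hx : (∑ g : G, WittVector.map (MulSemiringAction.toRingHom G R g) x).coeff (k + 1) = 0)
    {c : Γ₀} (hc : 0 ≤ c) (hxc : ∀ j ≤ k, c ≤ v (x.coeff j)) :
    ∃ z : R, ∏ g : G, g • x.coeff k = -∑ g : G, g • z ∧
      min (v (x.coeff (k + 1))) (p • c) ≤ v z := by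
  obtain ⟨Z, hZhom, hZ⟩ := exists_tracePoly_succ_eq p hG k
  let f : MvPolynomial (Σ _ : ℕ, G) (ZMod p) →+* R :=
    eval₂Hom (ZMod.castHom dvd_rfl R) fun i ↦ i.2 • x.coeff i.1
  have hfX (i : Σ _ : ℕ, G) : f (X i) = i.2 • x.coeff i.1 := eval₂Hom_X' _ _ _
  have hfrename (g : G) : f (rename (g • ·) Z) = g • f Z := by
    refine congrArg (· Z) (ringHom_ext' (Subsingleton.elim _ _) fun i ↦ ?_ :
      f.comp (rename (R := ZMod p) (g • ·)).toRingHom =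
        (MulSemiringAction.toRingHom G R g).comp f)
    simp only [RingHom.comp_apply, AlgHom.toRingHom_eq_coe, RingHom.coe_coe, rename_X, hfX]
    exact mul_smul g i.2 _
  refine ⟨f Z, ?_, le_map_of_isWeightedHomogeneous v hZhom f hc ?_ ?_⟩
  · rw [eq_neg_iff_add_eq_zero, ← hx]
    have hfZ := congrArg f hZ
    simp only [map_tracePoly, map_add, map_prod, map_sum, hfX, hfrename] at hfZ
    exact hfZ.symm
  · rintro ⟨j, g⟩ hj
    rw [hfX, hv]
    exact hxc j hj
  · rintro ⟨_, g⟩ rfl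
    rw [hfX, hv]

variable {v} {ι : Type*} {s : Finset ι} {f : ι → R}

lemma exists_lt_map_sum_sub (hinj : Set.InjOn (fun i ↦ v (f i)) {i ∈ s | v (f i) ≠ ⊤})
    (hs : ∃ i ∈ s, v (f i) ≠ ⊤) :
    ∃ k ∈ s, (∀ i ∈ s, v (f k) ≤ v (f i)) ∧ v (f k) < v (∑ j ∈ s, f j - f k) := by
  obtain ⟨i, hi, hitop⟩ := hs
  obtain ⟨k, hk, hmin⟩ := s.exists_min_image (fun j ↦ v (f j)) ⟨i, hi⟩
  have hktop : v (f k) ≠ ⊤ := ne_top_of_le_ne_top hitop (hmin i hi)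
  refine ⟨k, hk, hmin, ?_⟩
  rw [← Finset.add_sum_erase s f hk, add_sub_cancel_left]
  refine v.map_lt_sum' (lt_top_iff_ne_top.2 hktop) fun j hj ↦ ?_
  obtain ⟨hjk, hj⟩ := Finset.mem_erase.1 hj
  exact (hmin j hj).lt_of_ne fun heq ↦ hjk (hinj ⟨hj, heq ▸ hktop⟩ ⟨hk, hktop⟩ heq.symm)

lemma map_sum_le_map_of_injOn (hinj : Set.InjOn (fun i ↦ v (f i)) {i ∈ s | v (f i) ≠ ⊤})
    {i : ι} (hi : i ∈ s) : v (∑ j ∈ s, f j) ≤ v (f i) := by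
  by_cases htop : v (f i) = ⊤
  · exact htop ▸ le_top
  · obtain ⟨k, -, hmin, hlt⟩ := exists_lt_map_sum_sub hinj ⟨i, hi, htop⟩
    exact (v.map_eq_of_lt_sub hlt).trans_le (hmin i hi)

end Valuation

lemma coe_le_of_sub_one_lt {a : WithTop ℤ} {m : ℤ} (h : ((m - 1 : ℤ) : WithTop ℤ) < a) :
    (m : WithTop ℤ) ≤ a := by
  cases a with
  | top => exact le_top
  | coe a => exact WithTop.coe_le_coe.2 (Int.sub_one_lt_iff.1 (WithTop.coe_lt_coe.1 h))

section Difference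

variable {K L : Type*} [Field K] [Field L] [Algebra K L]

/-- The operator `σ - 1` on `L`. -/
def diffOp (σ : L ≃ₐ[K] L) : Module.End K L := σ.toLinearMap - 1

variable (σ : L ≃ₐ[K] L)

lemma diffOp_apply (x : L) : diffOp σ x = σ x - x := rfl

lemma diffOp_pow_mul_self {π e : L} (he : diffOp σ π = e * π) (i : ℕ) :
    diffOp σ (π ^ i) = (∑ j ∈ Finset.range i, (1 + e) ^ j) * e * π ^ i := by
  have hσ : σ π = (1 + e) * π := by
    rw [add_mul, one_mul, ← he, diffOp_apply, add_sub_cancel]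
  rw [diffOp_apply, map_pow, hσ, mul_pow, ← sub_one_mul, ← geom_sum_mul, add_sub_cancel_left]

lemma sum_range_pow_eq_sub_one_pow {p : ℕ} [Fact p.Prime] {R A : Type*} [CommRing R] [CharP R p]
    [Ring A] [Algebra R A] (a : A) : ∑ i ∈ Finset.range p, a ^ i = (a - 1) ^ (p - 1) := by
  have h := Polynomial.cyclotomic_mul_prime_eq_pow_of_not_dvd R
    (Nat.Prime.not_dvd_one Fact.out : ¬p ∣ 1)
  rw [one_mul, Polynomial.cyclotomic_prime, Polynomial.cyclotomic_one] at h
  simpa using congrArg (Polynomial.aeval a) h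

variable {σ} {p : ℕ} [Fact p.Prime] [CharP K p] [FiniteDimensional K L]

lemma sum_algEquiv_apply_eq (hcard : Nat.card (L ≃ₐ[K] L) = p) (hσ : σ ≠ 1) (y : L) :
    ∑ τ : L ≃ₐ[K] L, τ y = (diffOp σ ^ (p - 1)) y := by
  have hgen (τ : L ≃ₐ[K] L) : τ ∈ Subgroup.zpowers σ := mem_zpowers_of_prime_card hcard hσ
  have horder : orderOf σ = p := (orderOf_eq_card_of_forall_mem_zpowers hgen).trans hcard
  have hinj : Set.InjOn (σ ^ ·) (Finset.range (orderOf σ) : Set ℕ) := by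
    rw [Finset.coe_range]
    exact pow_injOn_Iio_orderOf
  have hpow (i : ℕ) : (σ.toLinearMap ^ i) y = (σ ^ i) y := by
    induction i with
    | zero => rfl
    | succ i ih => rw [pow_succ', pow_succ', Module.End.mul_apply, ih]; rfl
  calc ∑ τ : L ≃ₐ[K] L, τ y = ∑ i ∈ Finset.range p, (σ ^ i) y := by
        rw [← IsCyclic.image_range_orderOf hgen, Finset.sum_image hinj, horder]
    _ = (∑ i ∈ Finset.range p, σ.toLinearMap ^ i) y := by
        simp only [LinearMap.sum_apply, hpow]
    _ = (diffOp σ ^ (p - 1)) y := by rw [sum_range_pow_eq_sub_one_pow (R := K), diffOp]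

lemma diffOp_pow_eq_zero (hcard : Nat.card (L ≃ₐ[K] L) = p) (hσ : σ ≠ 1) :
    diffOp σ ^ p = 0 := by
  ext y
  rw [← mul_pow_sub_one (Nat.Prime.ne_zero Fact.out), Module.End.mul_apply,
    ← sum_algEquiv_apply_eq hcard hσ, diffOp_apply, map_sum, LinearMap.zero_apply, sub_eq_zero]
  exact Equiv.sum_comp (Equiv.mulLeft σ) fun τ : L ≃ₐ[K] L ↦ τ y

end Difference

section ShiftsValuation

variable {K L : Type*} [Field K] [Field L] [Algebra K L]

/-- `D` raises valuations by at least `t`, and by exactly `t` on elements whose valuation is prime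
to `p`; this is how `σ - 1` acts when `t` is the break of a wildly ramified extension of degree
`p`. -/
structure ShiftsValuation (p : ℕ) (v : AddValuation L (WithTop ℤ)) (D : Module.End K L) (t : ℤ) :
    Prop where
  add_le_map (y : L) : v y + t ≤ v (D y)
  map_eq_add {y : L} {m : ℤ} (hy : v y = m) (hm : ¬(p : ℤ) ∣ m) :
    v (D y) = ((m + t : ℤ) : WithTop ℤ)

namespace ShiftsValuation

variable {p : ℕ} {v : AddValuation L (WithTop ℤ)} {D : Module.End K L} {t : ℤ}

lemma add_le_map_pow (hD : ShiftsValuation p v D t) (k : ℕ) (y : L) :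
    v y + ((k * t : ℤ) : WithTop ℤ) ≤ v ((D ^ k) y) := by
  induction k with
  | zero => simp
  | succ k ih =>
    calc v y + (((k + 1 : ℕ) * t : ℤ) : WithTop ℤ) = v y + ((k * t : ℤ) : WithTop ℤ) + t := by
          rw [add_assoc, ← WithTop.coe_add, Nat.cast_succ, add_one_mul]
      _ ≤ v ((D ^ k) y) + t := add_le_add_left ih _
      _ ≤ v ((D ^ (k + 1)) y) := by
          rw [pow_succ', Module.End.mul_apply]
          exact hD.add_le_map _

lemma map_pow_eq_add (hD : ShiftsValuation p v D t) {y : L} {m : ℤ} (hy : v y = m) {k : ℕ}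
    (hk : ∀ i < k, ¬(p : ℤ) ∣ m + i * t) : v ((D ^ k) y) = ((m + k * t : ℤ) : WithTop ℤ) := by
  induction k with
  | zero => simpa using hy
  | succ k ih =>
    rw [pow_succ', Module.End.mul_apply,
      hD.map_eq_add (ih fun i hi ↦ hk i (hi.trans k.lt_succ_self)) (hk k k.lt_succ_self)]
    congr 1
    push_cast
    ring

variable [Fact p.Prime]

lemma not_dvd (hD : ShiftsValuation p v D t) (hnil : IsNilpotent D) {π : L} (hπ : v π = 1) :
    ¬(p : ℤ) ∣ t := by
  intro ht
  obtain ⟨n, hn⟩ := hnil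
  have hval := hD.map_pow_eq_add (m := 1) (k := n) hπ fun i _ h ↦
    (Nat.prime_iff_prime_int.1 Fact.out).not_dvd_one
      ((dvd_add_left (ht.mul_left (i : ℤ))).1 h)
  rw [hn, LinearMap.zero_apply, v.map_zero] at hval
  exact WithTop.top_ne_coe hval

lemma map_ne_of_pow_sub_one_apply_eq_zero (hD : ShiftsValuation p v D t) (ht : ¬(p : ℤ) ∣ t)
    {y : L} (hy : (D ^ (p - 1)) y = 0) : v y ≠ t := by
  intro hyt
  have hval := hD.map_pow_eq_add (k := p - 1) hyt fun i hi h ↦ by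
    rw [← one_add_mul] at h
    rcases (Nat.prime_iff_prime_int.1 Fact.out).dvd_or_dvd h with h | h
    · have hle := Int.le_of_dvd (by positivity) h
      have := Nat.Prime.one_lt (Fact.out : p.Prime)
      lia
    · exact ht h
  rw [hy, v.map_zero] at hval
  exact WithTop.top_ne_coe hval

end ShiftsValuation
end ShiftsValuation

section TotallyRamified

variable {K L : Type*} [Field K] [Field L] [Algebra K L] {v : AddValuation L (WithTop ℤ)} {π e : L}
  {σ : L ≃ₐ[K] L}

lemma map_diffOp_smul_pow {p : ℕ} [Fact p.Prime] [CharP L p] (he : diffOp σ π = e * π)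
    (hpos : 0 < v e) (c : K) {i : ℕ} (hi : ¬p ∣ i) :
    v (diffOp σ (c • π ^ i)) = v (c • π ^ i) + v e := by
  have hsum : v (∑ j ∈ Finset.range i, (1 + e) ^ j) = 0 := by
    have hv_i : v (i : L) = 0 := by
      simpa using map_intCast_eq_zero v (m := i) (mt Int.natCast_dvd_natCast.1 hi)
    refine (v.map_eq_of_lt_sub ?_).trans hv_i
    have hgeom (j : ℕ) : 0 < v ((1 + e) ^ j - 1) := by
      have h1 : 0 ≤ v (1 + e) := v.map_le_add v.map_one.ge hpos.le
      rw [← geom_sum_mul, add_sub_cancel_left, v.map_mul]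
      refine lt_add_of_nonneg_of_lt (v.map_le_sum fun k _ ↦ ?_) hpos
      exact v.map_pow _ k ▸ nsmul_nonneg h1 k
    rw [hv_i]
    simpa using v.map_lt_sum' (s := Finset.range i) (WithTop.coe_lt_top 0) fun j _ ↦ hgeom j
  rw [map_smul, diffOp_pow_mul_self σ he, Algebra.smul_def, Algebra.smul_def]
  simp only [v.map_mul, hsum, zero_add]
  rw [add_comm (v e), add_assoc]

lemma le_map_diffOp (hσ : ∀ x, v (σ x) = v x) (x : L) : v x ≤ v (diffOp σ x) :=
  v.map_le_sub (hσ x).ge le_rfl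

lemma one_lt_map_diffOp_pow_sub_smul (hσ : ∀ x, v (σ x) = v x) (hπ : v π = 1)
    (he : diffOp σ π = e * π) {c : K} (hc0 : 0 ≤ v (algebraMap K L c))
    (hc : 0 < v (e - algebraMap K L c)) (k : ℕ) : 1 < v ((diffOp σ ^ k) π - c ^ k • π) := by
  induction k with
  | zero => simp
  | succ k ih =>
    have hstep : (diffOp σ ^ (k + 1)) π - c ^ (k + 1) • π =
        diffOp σ ((diffOp σ ^ k) π - c ^ k • π) + c ^ k • ((e - algebraMap K L c) * π) := by
      rw [pow_succ', Module.End.mul_apply, map_sub, map_smul, he, sub_mul, smul_sub,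
        ← Algebra.smul_def, smul_smul, ← pow_succ, sub_add_sub_cancel]
    rw [hstep]
    refine v.map_lt_add (ih.trans_le (le_map_diffOp hσ _)) ?_
    rw [Algebra.smul_def, v.map_mul, v.map_mul, hπ, map_pow, v.map_pow]
    refine lt_add_of_nonneg_of_lt (nsmul_nonneg hc0 k) ?_
    exact (zero_add (1 : WithTop ℤ)).symm.trans_lt
      (WithTop.add_lt_add_right WithTop.one_ne_top hc)

/-- `L/K` is totally ramified for the normalized valuation `v` of `L`: the ramification index is
the degree. -/
def IsTotallyRamified (K : Type*) {L : Type*} [Field K] [Field L] [Algebra K L]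
    (v : AddValuation L (WithTop ℤ)) : Prop :=
  ∀ c : K, c ≠ 0 → ∃ a : ℤ, v (algebraMap K L c) = ((Module.finrank K L * a : ℤ) : WithTop ℤ)

namespace IsTotallyRamified

lemma exists_map_smul_pow (hv : IsTotallyRamified K v) (hπ : v π = 1) {c : K} (hc : c ≠ 0)
    (i : ℕ) : ∃ a : ℤ, v (c • π ^ i) = ((Module.finrank K L * a + i : ℤ) : WithTop ℤ) := by
  obtain ⟨a, ha⟩ := hv c hc
  refine ⟨a, ?_⟩
  rw [Algebra.smul_def, v.map_mul, v.map_pow, hπ, ha, nsmul_one, WithTop.coe_add]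
  rfl

lemma injOn_map_smul_pow (hv : IsTotallyRamified K v) (hπ : v π = 1) (c : ℕ → K) :
    Set.InjOn (fun i ↦ v (c i • π ^ i))
      {i ∈ Finset.range (Module.finrank K L) | v (c i • π ^ i) ≠ ⊤} := by
  have hne {i : ℕ} (hi : v (c i • π ^ i) ≠ ⊤) : c i ≠ 0 := by
    rintro h
    exact hi (by rw [h, zero_smul, v.map_zero])
  rintro i ⟨hi, hitop⟩ j ⟨hj, hjtop⟩ hij
  obtain ⟨a, ha⟩ := hv.exists_map_smul_pow hπ (hne hitop) i
  obtain ⟨b, hb⟩ := hv.exists_map_smul_pow hπ (hne hjtop) j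
  have hmod : (Module.finrank K L * a + i : ℤ) = Module.finrank K L * b + j :=
    WithTop.coe_injective (ha.symm.trans (hij.trans hb))
  refine Nat.ModEq.eq_of_lt_of_lt (Int.natCast_modEq_iff.1 ?_) (Finset.mem_range.1 hi)
    (Finset.mem_range.1 hj)
  exact Int.modEq_iff_dvd.2 ⟨a - b, by linear_combination -hmod⟩

lemma linearIndependent_pow (hv : IsTotallyRamified K v) (hπ : v π = 1) :
    LinearIndependent K fun i : Fin (Module.finrank K L) ↦ π ^ (i : ℕ) := by
  have hπ0 : π ≠ 0 := v.ne_top_iff.1 (hπ ▸ WithTop.one_ne_top)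
  rw [Fintype.linearIndependent_iff]
  intro c hc i
  let c' (j : ℕ) : K := if h : j < Module.finrank K L then c ⟨j, h⟩ else 0
  have hsum : ∑ j ∈ Finset.range (Module.finrank K L), c' j • π ^ j = 0 := by
    rw [Finset.sum_range, ← hc]
    simp [c']
  have htop := map_sum_le_map_of_injOn (hv.injOn_map_smul_pow hπ c') (Finset.mem_range.2 i.2)
  rw [hsum, v.map_zero, top_le_iff, v.top_iff, smul_eq_zero] at htop
  simpa [c'] using htop.resolve_right (pow_ne_zero _ hπ0)

lemma exists_eq_sum_smul_pow [FiniteDimensional K L] (hv : IsTotallyRamified K v) (hπ : v π = 1)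
    (y : L) : ∃ c : ℕ → K, y = ∑ i ∈ Finset.range (Module.finrank K L), c i • π ^ i := by
  have hspan := (hv.linearIndependent_pow hπ).span_eq_top_of_card_eq_finrank' (Fintype.card_fin _)
  obtain ⟨c, hc⟩ := (Submodule.mem_span_range_iff_exists_fun K).1
    (hspan ▸ Submodule.mem_top : y ∈ _)
  refine ⟨fun j ↦ if h : j < Module.finrank K L then c ⟨j, h⟩ else 0, ?_⟩
  rw [← hc, Finset.sum_range]
  simp

lemma exists_lt_map_sub_smul_pow [FiniteDimensional K L] (hv : IsTotallyRamified K v)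
    (hπ : v π = 1) {y : L} {m : ℤ} (hy : v y = m) :
    ∃ c : K, ∃ i < Module.finrank K L, m ≡ i [ZMOD Module.finrank K L] ∧
      v y < v (y - c • π ^ i) := by
  obtain ⟨c, hc⟩ := hv.exists_eq_sum_smul_pow hπ y
  have hytop : v y ≠ ⊤ := hy ▸ WithTop.coe_ne_top
  obtain ⟨i, hi, -, hlt⟩ := exists_lt_map_sum_sub (hv.injOn_map_smul_pow hπ c) (by
    by_contra! htop
    exact hytop (hc ▸ top_le_iff.1 (v.map_le_sum fun i hi ↦ (htop i hi).ge)))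
  rw [← hc] at hlt
  have hterm : v y = v (c i • π ^ i) := v.map_eq_of_lt_sub hlt
  have hci : c i ≠ 0 := by
    rintro h
    exact hytop (by rw [hterm, h, zero_smul, v.map_zero])
  obtain ⟨a, ha⟩ := hv.exists_map_smul_pow hπ hci i
  have hm : m = Module.finrank K L * a + i :=
    WithTop.coe_injective (hy.symm.trans (hterm.trans ha))
  refine ⟨c i, i, Finset.mem_range.1 hi, ?_, hterm.trans_lt hlt⟩
  exact (Int.modEq_iff_dvd.2 ⟨a, by linear_combination hm⟩).symm

lemma exists_pos_map_sub_algebraMap [FiniteDimensional K L] (hv : IsTotallyRamified K v)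
    (hπ : v π = 1) {x : L} (hx : 0 ≤ v x) : ∃ c : K, 0 < v (x - algebraMap K L c) := by
  rcases hx.eq_or_lt with hx | hx
  · obtain ⟨c, i, hi, hmod, hlt⟩ := hv.exists_lt_map_sub_smul_pow hπ (m := 0) hx.symm
    have hi0 : i = 0 :=
      Nat.eq_zero_of_dvd_of_lt (Int.natCast_dvd_natCast.1 (Int.modEq_zero_iff_dvd.1 hmod.symm)) hi
    rw [hi0, pow_zero, ← Algebra.algebraMap_eq_smul_one] at hlt
    exact ⟨c, hx.trans_lt hlt⟩
  · exact ⟨0, by rwa [map_zero, sub_zero]⟩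

variable [FiniteDimensional K L]

lemma map_pos_of_diffOp_eq_mul (hv : IsTotallyRamified K v) (hπ : v π = 1)
    (hσ : ∀ x, v (σ x) = v x) (hnil : IsNilpotent (diffOp σ)) (he : diffOp σ π = e * π) :
    0 < v e := by
  have hint : 0 ≤ v e := by
    refine (WithTop.add_le_add_iff_right WithTop.one_ne_top).1 ?_
    rw [zero_add, ← hπ, ← v.map_mul, ← he]
    exact le_map_diffOp hσ π
  obtain ⟨c, hc⟩ := hv.exists_pos_map_sub_algebraMap hπ hint
  have hc0 : 0 ≤ v (algebraMap K L c) :=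
    sub_sub_cancel e (algebraMap K L c) ▸ v.map_le_sub hint hc.le
  obtain ⟨n, hn⟩ := hnil
  have hcn : 0 < n • v (algebraMap K L c) := by
    have hpow := one_lt_map_diffOp_pow_sub_smul hσ hπ he hc0 hc n
    rw [hn, LinearMap.zero_apply, zero_sub, v.map_neg, Algebra.smul_def, v.map_mul, hπ, map_pow,
      v.map_pow] at hpow
    exact (WithTop.add_lt_add_iff_right WithTop.one_ne_top).1 ((zero_add _).trans_lt hpow)
  have hc1 : 0 < v (algebraMap K L c) :=
    hc0.lt_of_ne fun h ↦ hcn.ne (by rw [← h, smul_zero])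
  exact sub_add_cancel e (algebraMap K L c) ▸ v.map_lt_add hc hc1

section

variable {p : ℕ} [Fact p.Prime] [CharP L p] (hdeg : Module.finrank K L = p)
  (hv : IsTotallyRamified K v) (hπ : v π = 1) (he : diffOp σ π = e * π) (hpos : 0 < v e)
include hdeg hv hπ he hpos

lemma map_add_le_map_diffOp (y : L) : v y + v e ≤ v (diffOp σ y) := by
  obtain ⟨c, hc⟩ := hv.exists_eq_sum_smul_pow hπ y
  have hy {i : ℕ} (hi : i ∈ Finset.range (Module.finrank K L)) : v y ≤ v (c i • π ^ i) :=
    hc ▸ map_sum_le_map_of_injOn (hv.injOn_map_smul_pow hπ c) hi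
  conv_rhs => rw [hc, map_sum]
  refine v.map_le_sum fun i hi ↦ ?_
  rcases Nat.eq_zero_or_pos i with rfl | hi0
  · rw [map_smul, diffOp_apply, pow_zero, _root_.map_one, sub_self, smul_zero, v.map_zero]
    exact le_top
  · have hpi : ¬p ∣ i := Nat.not_dvd_of_pos_of_lt hi0 (hdeg ▸ Finset.mem_range.1 hi)
    rw [map_diffOp_smul_pow he hpos (c i) hpi]
    exact add_le_add_left (hy hi) _

lemma shiftsValuation_diffOp {t : ℤ} (het : v e = t) : ShiftsValuation p v (diffOp σ) t where
  add_le_map y := het ▸ map_add_le_map_diffOp hdeg hv hπ he hpos y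
  map_eq_add {y m} hy hm := by
    obtain ⟨c, i, -, hmod, hlt⟩ := hv.exists_lt_map_sub_smul_pow hπ hy
    have hpi : ¬p ∣ i := fun h ↦
      hm ((hdeg ▸ hmod).dvd_iff.2 (Int.natCast_dvd_natCast.2 h))
    have hterm : v (c • π ^ i) = v y := v.map_eq_of_lt_sub (v.map_sub_swap y _ ▸ hlt)
    have hD : v (diffOp σ (c • π ^ i)) = v y + t := by
      rw [map_diffOp_smul_pow he hpos c hpi, hterm, het]
    refine (v.map_eq_of_lt_sub ?_).trans (hD.trans (by rw [hy]; rfl))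
    rw [hD, ← map_sub]
    exact (WithTop.add_lt_add_right WithTop.coe_ne_top hlt).trans_le
      (het ▸ map_add_le_map_diffOp hdeg hv hπ he hpos _)

end

end IsTotallyRamified

/-- Serre's ramification number `i_G(σ)`: the least valuation of `σ x - x` for `x` in the valuation
ring of `v`. -/
def IsRamificationNumber (v : AddValuation L (WithTop ℤ)) (σ : L ≃ₐ[K] L) (i : ℤ) : Prop :=
  IsLeast ((fun x ↦ v (σ x - x)) '' {x | 0 ≤ v x}) i

lemma IsRamificationNumber.ne_one {σ : L ≃ₐ[K] L} {i : ℤ} (hi : IsRamificationNumber v σ i) :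
    σ ≠ 1 := by
  rintro rfl
  obtain ⟨x, -, hx⟩ := hi.1
  simp at hx

lemma IsRamificationNumber.shiftsValuation_diffOp {p : ℕ} [Fact p.Prime] [CharP L p]
    [FiniteDimensional K L] (hdeg : Module.finrank K L = p) (hv : IsTotallyRamified K v)
    (hπ : v π = 1) {σ : L ≃ₐ[K] L} (hσ : ∀ x, v (σ x) = v x) (hnil : IsNilpotent (diffOp σ))
    {i : ℤ} (hi : IsRamificationNumber v σ i) : ShiftsValuation p v (diffOp σ) (i - 1) := by
  have hπ0 : π ≠ 0 := v.ne_top_iff.1 (hπ ▸ WithTop.one_ne_top)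
  obtain ⟨e, he⟩ : ∃ e, diffOp σ π = e * π := ⟨diffOp σ π / π, (div_mul_cancel₀ _ hπ0).symm⟩
  have hpos := hv.map_pos_of_diffOp_eq_mul hπ hσ hnil he
  have hDπ : v (diffOp σ π) = v e + 1 := by rw [he, v.map_mul, hπ]
  have hleast : IsLeast ((fun x ↦ v (σ x - x)) '' {x | 0 ≤ v x}) (v e + 1) := by
    refine ⟨⟨π, by simp [hπ], hDπ⟩, ?_⟩
    rintro _ ⟨x, hx, rfl⟩
    obtain ⟨c, hc⟩ := hv.exists_pos_map_sub_algebraMap hπ hx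
    have hDc : diffOp σ (x - algebraMap K L c) = σ x - x := by
      rw [diffOp_apply, map_sub, σ.commutes, sub_sub_sub_cancel_right]
    calc v e + 1 ≤ v (x - algebraMap K L c) + v e := by
          rw [add_comm]
          exact add_le_add_left (coe_le_of_sub_one_lt (m := 1) hc) _
      _ ≤ v (σ x - x) := hDc ▸ IsTotallyRamified.map_add_le_map_diffOp hdeg hv hπ he hpos _
  refine IsTotallyRamified.shiftsValuation_diffOp hdeg hv hπ he hpos ?_
  refine (WithTop.add_right_inj WithTop.one_ne_top).1 ?_
  rw [hleast.unique hi]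
  exact congrArg _ (sub_add_cancel i 1).symm

end TotallyRamified

section TraceZero

variable {K L : Type*} [Field K] [Field L] [Algebra K L] [FiniteDimensional K L]
  {p : ℕ} [Fact p.Prime] [CharP L p] {v : AddValuation L (WithTop ℤ)} {D : Module.End K L} {t : ℤ}
  (hcard : Nat.card (L ≃ₐ[K] L) = p) (hGal : ∀ (τ : L ≃ₐ[K] L) (y : L), v (τ y) = v y)
  (htrace : ∀ y, ∑ τ : L ≃ₐ[K] L, τ y = (D ^ (p - 1)) y) (hD : ShiftsValuation p v D t)
  {x : WittVector p L} {m : ℕ}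
  (hx : ∀ k ≤ m, (∑ τ : L ≃ₐ[K] L,
    WittVector.map (MulSemiringAction.toRingHom (L ≃ₐ[K] L) L τ) x).coeff k = 0)

include hcard hGal htrace hD hx

lemma min_add_le_nsmul_map_coeff {k : ℕ} (hk : k < m) {c : WithTop ℤ} (hc : 0 ≤ c)
    (hxc : ∀ j ≤ k, c ≤ v (x.coeff j)) :
    min (v (x.coeff (k + 1))) (p • c) + (((p - 1 : ℕ) * t : ℤ) : WithTop ℤ) ≤
      p • v (x.coeff k) := by
  obtain ⟨z, hz, hvz⟩ := exists_prod_smul_eq_neg_sum_smul v hcard hGal (hx (k + 1) hk) hc hxc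
  calc min (v (x.coeff (k + 1))) (p • c) + (((p - 1 : ℕ) * t : ℤ) : WithTop ℤ)
      ≤ v z + (((p - 1 : ℕ) * t : ℤ) : WithTop ℤ) := add_le_add_left hvz _
    _ ≤ v ((D ^ (p - 1)) z) := hD.add_le_map_pow _ z
    _ = v (∏ τ : L ≃ₐ[K] L, τ (x.coeff k)) := by
        rw [← htrace, ← v.map_neg]
        exact congrArg v hz.symm
    _ = p • v (x.coeff k) := by
        simp only [map_prod_eq_sum, hGal, Finset.sum_const, Finset.card_univ,
          ← Nat.card_eq_fintype_card, hcard]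

variable (ht : 0 ≤ t) (hx0 : ∀ k ≤ m, 0 ≤ v (x.coeff k))
include ht hx0

lemma min_add_le_nsmul_min {k : ℕ} (hk : k < m) :
    min (v (x.coeff (k + 1))) t + (((p - 1 : ℕ) * t : ℤ) : WithTop ℤ) ≤
      p • min (v (x.coeff k)) t := by
  have hp := (Fact.out : p.Prime).one_lt
  have hcrude {j : ℕ} (hj : j < m) : (t : WithTop ℤ) ≤ p • v (x.coeff j) := by
    have h := min_add_le_nsmul_map_coeff hcard hGal htrace hD hx hj le_rfl
      fun i hi ↦ hx0 i (hi.trans hj.le)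
    rw [smul_zero, min_eq_right (hx0 (j + 1) hj), zero_add] at h
    exact (WithTop.coe_le_coe.2 (le_mul_of_one_le_left ht (by lia))).trans h
  obtain ⟨j, hj, hmin⟩ :=
    (Finset.range (k + 1)).exists_min_image (fun j ↦ v (x.coeff j)) Finset.nonempty_range_add_one
  have hjm : j < m := (Finset.mem_range_succ_iff.1 hj).trans_lt hk
  rw [(nsmul_right_mono p).map_min]
  refine le_min ?_ ?_
  · calc min (v (x.coeff (k + 1))) t + (((p - 1 : ℕ) * t : ℤ) : WithTop ℤ)
        ≤ min (v (x.coeff (k + 1))) (p • v (x.coeff j)) + (((p - 1 : ℕ) * t : ℤ) : WithTop ℤ) :=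
          add_le_add_left (min_le_min_left _ (hcrude hjm)) _
      _ ≤ p • v (x.coeff k) := min_add_le_nsmul_map_coeff hcard hGal htrace hD hx hk (hx0 j hjm.le)
          fun i hi ↦ hmin i (Finset.mem_range_succ_iff.2 hi)
  · calc min (v (x.coeff (k + 1))) t + (((p - 1 : ℕ) * t : ℤ) : WithTop ℤ)
        ≤ t + (((p - 1 : ℕ) * t : ℤ) : WithTop ℤ) := add_le_add_left (min_le_right _ _) _
      _ = p • (t : WithTop ℤ) := by
          rw [← WithTop.coe_add, ← WithTop.coe_nsmul, Nat.cast_pred (by lia)]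
          congr 1
          rw [nsmul_eq_mul]
          ring

lemma pow_mul_sub_le {i k : ℕ} (hk : k + i ≤ m) {a : ℤ} (ha : min (v (x.coeff k)) t = a) :
    p ^ i * (t - a) ≤ t := by
  induction i generalizing k a with
  | zero =>
    have ha0 : 0 ≤ a := WithTop.coe_nonneg.1 (ha ▸ le_min (hx0 k hk) (WithTop.coe_nonneg.2 ht))
    rwa [pow_zero, one_mul, sub_le_self_iff]
  | succ i ih =>
    have hstep := min_add_le_nsmul_min hcard hGal htrace hD hx ht hx0 (by lia : k < m)
    obtain ⟨b, hb⟩ := WithTop.ne_top_iff_exists.1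
      (ne_top_of_le_ne_top WithTop.coe_ne_top (min_le_right (v (x.coeff (k + 1))) (t : WithTop ℤ)))
    rw [ha, ← hb, ← WithTop.coe_add, ← WithTop.coe_nsmul, WithTop.coe_le_coe, nsmul_eq_mul,
      Nat.cast_pred (Nat.Prime.pos Fact.out)] at hstep
    calc (p : ℤ) ^ (i + 1) * (t - a) = p ^ i * (p * (t - a)) := by rw [pow_succ, mul_assoc]
      _ ≤ p ^ i * (t - b) := by
        gcongr
        linarith
      _ ≤ t := ih (by lia) hb.symm

lemma lt_map_coeff_zero (hnil : IsNilpotent D) {π : L} (hπ : v π = 1) (htm : t < p ^ m) :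
    t < v (x.coeff 0) := by
  have hle : t ≤ v (x.coeff 0) := by
    by_contra! hlt
    obtain ⟨a, ha⟩ := WithTop.ne_top_iff_exists.1 hlt.ne_top
    have hat : a < t := WithTop.coe_lt_coe.1 (ha ▸ hlt)
    have hpow := pow_mul_sub_le hcard hGal htrace hD hx ht hx0 (zero_add m).le
      ((min_eq_left hlt.le).trans ha.symm)
    have := le_mul_of_one_le_right (by positivity : 0 ≤ (p : ℤ) ^ m) (by lia : 1 ≤ t - a)
    lia
  have htrace0 : (D ^ (p - 1)) (x.coeff 0) = 0 := by
    rw [← htrace, ← hx 0 m.zero_le]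
    exact (map_sum (WittVector.constantCoeff (p := p) (R := L)) (fun τ : L ≃ₐ[K] L ↦
      WittVector.map (MulSemiringAction.toRingHom (L ≃ₐ[K] L) L τ) x) Finset.univ).symm
  exact hle.lt_of_ne' (hD.map_ne_of_pow_sub_one_apply_eq_zero (hD.not_dvd hnil hπ) htrace0)

end TraceZero

lemma sum_map_out_coeff {p n : ℕ} [Fact p.Prime] {R S ι : Type*} [CommRing R] [CommRing S]
    (s : Finset ι) (f : ι → R →+* S) (x : TruncatedWittVector p n R) (k : Fin n) :
    (∑ i ∈ s, WittVector.map (f i) x.out).coeff k =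
      (∑ i ∈ s, TruncatedWittVector.map (f i) x).coeff k := by
  rw [← WittVector.coeff_truncate, map_sum]
  rfl

lemma lt_pow_of_sub_one_lt_mul_geom_sum {p s m : ℕ} (hp : 1 < p)
    (hs : (s : ℚ) - 1 < s * (p - 1) / p * ∑ j ∈ Finset.range m, (1 / p : ℚ) ^ j) : s < p ^ m := by
  have hp1 : (1 : ℚ) < p := Nat.one_lt_cast.2 hp
  have hgeom : (s * (p - 1) / p * ∑ j ∈ Finset.range m, (1 / p : ℚ) ^ j) =
      s * (1 - (1 / p : ℚ) ^ m) := by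
    have hratio : (1 - 1 / p : ℚ) = (p - 1) / p := by field_simp
    rw [mul_div_assoc, ← hratio, mul_assoc, mul_neg_geom_sum]
  have hdiv : (s : ℚ) / p ^ m < 1 := by
    rw [hgeom, one_div, inv_pow] at hs
    rw [div_eq_mul_inv]
    linarith
  exact_mod_cast (div_lt_one (by positivity)).1 hdiv

end WittTrace

theorem witt_trace_zero_first_coeff_valuation_general {p n : ℕ} [Fact p.Prime] {K L : Type*}
    [Field K] [Field L] [Algebra K L] [CharP K p] [FiniteDimensional K L] [IsGalois K L]
    (hdeg : Module.finrank K L = p) (v : AddValuation L (WithTop ℤ)) {π : L} (hπ : v π = 1)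
    (hv : WittTrace.IsTotallyRamified K v) (hGal : ∀ (τ : L ≃ₐ[K] L) (y : L), v (τ y) = v y)
    {σ : L ≃ₐ[K] L} {s : ℕ} (hs : WittTrace.IsRamificationNumber v σ s) (hn : 0 < n)
    (hsn : s ≤ p ^ (n - 1)) {x : TruncatedWittVector p n L} (hx0 : ∀ i, 0 ≤ v (x.coeff i))
    (hx : ∑ τ : L ≃ₐ[K] L, TruncatedWittVector.map (τ : L →+* L) x = 0) :
    ((s : ℤ) : WithTop ℤ) ≤ v (x.coeff ⟨0, hn⟩) := by
  have : CharP L p := charP_of_injective_algebraMap (algebraMap K L).injective p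
  have hcard : Nat.card (L ≃ₐ[K] L) = p := (IsGalois.card_aut_eq_finrank K L).trans hdeg
  have hnil : WittTrace.diffOp σ ^ p = 0 := WittTrace.diffOp_pow_eq_zero hcard hs.ne_one
  have hshift := hs.shiftsValuation_diffOp hdeg hv hπ (hGal σ) ⟨p, hnil⟩
  rcases s.eq_zero_or_pos with rfl | hs0
  · exact hx0 ⟨0, hn⟩
  have hcoeff (k : ℕ) (hk : k ≤ n - 1) : (∑ τ : L ≃ₐ[K] L,
      WittVector.map (MulSemiringAction.toRingHom (L ≃ₐ[K] L) L τ) x.out).coeff k = 0 := by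
    have hk' : k < n := by lia
    exact (WittTrace.sum_map_out_coeff Finset.univ _ x ⟨k, hk'⟩).trans <|
      (congrArg (TruncatedWittVector.coeff ⟨k, hk'⟩) hx).trans
        (TruncatedWittVector.coeff_zero p n L ⟨k, hk'⟩)
  have hint (k : ℕ) (hk : k ≤ n - 1) : 0 ≤ v (x.out.coeff k) :=
    x.coeff_out ⟨k, by lia⟩ ▸ hx0 _
  have hlt := WittTrace.lt_map_coeff_zero hcard hGal
    (WittTrace.sum_algEquiv_apply_eq hcard hs.ne_one) hshift hcoeff (by lia) hint ⟨p, hnil⟩ hπ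
    (by zify at hsn; lia)
  exact WittTrace.coe_le_of_sub_one_lt (x.coeff_out ⟨0, hn⟩ ▸ hlt)

namespace CompleteDiscreteValuation

variable {K L : Type*} [Field K] [Field L] [Algebra K L] {wL : CompleteDiscreteValuation L}

/-- The valuation of a complete discretely valued field as a bundled additive valuation. -/
def toAddValuation_s15 (w : CompleteDiscreteValuation L) : AddValuation L (WithTop ℤ) :=
  .of w.v w.v_zero w.map_one w.min_le_add w.map_mul

lemma IsRamificationBreak.exists_isRamificationNumber {s : ℕ} (hs : IsRamificationBreak K wL s)
    (hs1 : 1 ≤ s) : ∃ σ : L ≃ₐ[K] L, WittTrace.IsRamificationNumber wL.toAddValuation_s15 σ s := by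
  have hfaithful := hs.2 (s - 1) (by lia)
  simp only [FaithfulOnQuotient, not_forall, not_exists, not_and, not_le] at hfaithful
  obtain ⟨σ, hσ, hlt⟩ := hfaithful
  have hle {x : L} (hx : 0 ≤ wL.v x) : ((s : ℤ) : WithTop ℤ) ≤ wL.v (σ x - x) :=
    WittTrace.coe_le_of_sub_one_lt (Nat.cast_pred (R := ℤ) hs1 ▸ hlt x hx)
  obtain ⟨x, hx, hxs⟩ := hs.1 σ hσ
  refine ⟨σ, ⟨x, hx, hxs.antisymm (hle hx)⟩, ?_⟩
  rintro _ ⟨y, hy, rfl⟩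
  exact hle hy

lemma isTotallyRamified_toAddValuation {wK : CompleteDiscreteValuation K}
    (htot : ∀ x : K, wL.v (algebraMap K L x) = Module.finrank K L • wK.v x) :
    WittTrace.IsTotallyRamified K wL.toAddValuation_s15 := by
  intro c hc
  obtain ⟨a, ha⟩ := WithTop.ne_top_iff_exists.1 (mt (wK.eq_top_iff c).1 hc)
  refine ⟨a, (htot c).trans ?_⟩
  rw [← ha, ← WithTop.coe_nsmul, nsmul_eq_mul]

lemma map_subtype_map_galRes {p n : ℕ} [Fact p.Prime]
    (hGal : ∀ (τ : L ≃ₐ[K] L) (y : L), wL.v (τ y) = wL.v y) (τ : L ≃ₐ[K] L)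
    (w : TruncatedWittVector p n wL.integers) :
    TruncatedWittVector.map wL.integers.subtype (TruncatedWittVector.map (wL.galRes hGal τ) w) =
      TruncatedWittVector.map (τ : L →+* L) (TruncatedWittVector.map wL.integers.subtype w) := by
  ext i
  simp only [TruncatedWittVector.map_coeff]
  rfl

end CompleteDiscreteValuation

/-- Let `L/K` be a totally ramified Galois extension of degree `p` of
complete discrete valued fields of characteristic `p`, with ramification break `s ≥ 1`.
For every `n ≥ 2` with `(s (p-1)/p) (1 + 1/p + ⋯ + 1/p^{n-3}) > s - 1`, every trace-zero
Witt vector `(x₀, …, x_{n-1}) ∈ Wₙ(O_L)` satisfies `v_L(x₀) ≥ s`. -/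
theorem witt_trace_zero_first_coeff_valuation
    (p : ℕ) [Fact p.Prime]
    {K L : Type*} [Field K] [Field L] [Algebra K L] [CharP K p]
    (wK : CompleteDiscreteValuation K) (wL : CompleteDiscreteValuation L)
    [IsGalois K L] [FiniteDimensional K L] (hdeg : Module.finrank K L = p)
    (htot : ∀ x : K, wL.v (algebraMap K L x) = p • wK.v x)
    (hGal : ∀ (σ : L ≃ₐ[K] L) (x : L), wL.v (σ x) = wL.v x)
    (s : ℕ) (hs : IsRamificationBreak K wL s) (hs1 : 1 ≤ s)
    (n : ℕ) (hn : 2 ≤ n)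
    (hbig : (s : ℚ) * ((p : ℚ) - 1) / (p : ℚ) *
        (∑ j ∈ Finset.range (n - 2), ((1 : ℚ) / (p : ℚ)) ^ j) > (s : ℚ) - 1) :
    ∀ w : TruncatedWittVector p n wL.integers,
      (∑ τ : L ≃ₐ[K] L, TruncatedWittVector.map (wL.galRes hGal τ) w = 0) →
      ((s : ℤ) : WithTop ℤ) ≤ wL.v ((w.coeff ⟨0, by omega⟩ : wL.integers) : L) := by
  obtain ⟨σ, hσ⟩ := hs.exists_isRamificationNumber hs1
  obtain ⟨π, hπ⟩ := wL.surjective 1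
  intro w hw
  have hx : ∑ τ : L ≃ₐ[K] L, TruncatedWittVector.map (τ : L →+* L)
      (TruncatedWittVector.map wL.integers.subtype w) = 0 := by
    simp only [← map_subtype_map_galRes hGal, ← map_sum, hw, map_zero]
  have hsn : s ≤ p ^ (n - 1) :=
    (WittTrace.lt_pow_of_sub_one_lt_mul_geom_sum (Nat.Prime.one_lt Fact.out) hbig).le.trans
      (Nat.pow_le_pow_right (Nat.Prime.pos Fact.out) (by lia))
  have hle := witt_trace_zero_first_coeff_valuation_general hdeg wL.toAddValuation_s15 hπ
    (isTotallyRamified_toAddValuation (hdeg.symm ▸ htot)) hGal hσ (by lia) hsn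
    (fun i ↦ TruncatedWittVector.map_coeff wL.integers.subtype w i ▸ (w.coeff i).2) hx
  rwa [TruncatedWittVector.map_coeff] at hle
end
end

section
/- Let L/K be a totally ramified Galois extension of degree p of complete discrete valued fields of characteristic p, with Galois group G and ramification break s ≥ 1. Then for every integer n ≥ 2 with (s(p−1)/p)·(1 + 1/p + ⋯ + 1/p^{n−3}) > s − 1, the map H^1(G, W_n(O_L)) → H^1(G, O_L) induced by the projection W_n(O_L) → W_1(O_L) = O_L onto the first Witt component is the zero map. -/
/-!
Common background: complete discretely valued fields, their valuation rings,
residue fields, Galois action on the valuation ring, truncated Witt vector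
functoriality, and ramification breaks.
-/

noncomputable section

open scoped Classical

open CompleteDiscreteValuation

/-!
Let `σ` generate `G`, let `π` be a uniformizer of `L`, and put `t = s - 1 = v (σ π / π - 1)`; the
extension is wildly ramified, so `t ≥ 1`. A cocycle is determined by its value `X` at `σ`, a Witt
vector of trace zero. In `ℤ[X]` the prime `p` is congruent to `∏ (1 - X ^ k)`, `1 ≤ k < p`, modulo
`1 + X + ⋯ + X ^ (p - 1)`, so `p • X = ∏ (1 - σ ^ k) X`. Each factor `1 - σ ^ k` raises valuations
by at least `t`, while in characteristic `p` multiplication by `p` shifts the components and raises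
them to the `p`-th power. Iterating, the first component `X₀` satisfies
`v X₀ ≥ t - t / p ^ (n - 1) > t - 1`, hence `v X₀ ≥ t`.

By the additive Hilbert 90 the first components of the cocycle form the coboundary of some `y : L`.
Expanding `y = k₀ + k₁ π + ⋯ + k_{p-1} π ^ (p - 1)` over `K` one finds
`v (σ y - y) = t + v (y - k₀)`, so `v X₀ ≥ t` means that `y - k₀`, which has the same coboundary,
is integral.
-/

namespace H1Truncation

section Cyclotomic

open Polynomial

lemma cyclotomic_dvd_natCast_sub_prod_one_sub_X_pow {n : ℕ} (hn : 0 < n) :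
    cyclotomic n ℤ ∣ (n : ℤ[X]) - ∏ k ∈ Finset.range (n - 1), (1 - X ^ (k + 1)) := by
  obtain ⟨m, rfl⟩ := Nat.exists_eq_add_one.mpr hn
  have hζ := Complex.isPrimitiveRoot_exp (m + 1) m.succ_ne_zero
  rw [cyclotomic_eq_minpoly hζ hn, Nat.add_sub_cancel]
  refine minpoly.isIntegrallyClosed_dvd (hζ.isIntegral hn) ?_
  simpa [sub_eq_zero] using hζ.prod_one_sub_pow_eq_order.symm

variable {M : Type*} [AddCommGroup M] {φ : Module.End ℤ M}

lemma prime_nsmul_eq_aeval_of_sum_pow_eq_zero {p : ℕ} [hp : Fact p.Prime] {x : M}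
    (hx : ∑ i ∈ Finset.range p, (φ ^ i) x = 0) :
    p • x = aeval φ (∏ k ∈ Finset.range (p - 1), (1 - X ^ (k + 1)) : ℤ[X]) x := by
  obtain ⟨Q, hQ⟩ := cyclotomic_dvd_natCast_sub_prod_one_sub_X_pow hp.out.pos
  have hnorm : aeval φ (cyclotomic p ℤ) x = 0 := by
    simpa [cyclotomic_prime, LinearMap.sum_apply] using hx
  have h := congrArg (fun P ↦ aeval φ P x) hQ
  simp only [mul_comm _ Q, _root_.map_mul, Module.End.mul_apply, hnorm, _root_.map_zero, map_sub,
    map_natCast, LinearMap.sub_apply, Module.End.natCast_apply, sub_eq_zero] at h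
  exact h

variable {D : ℕ → AddSubgroup M} {t : ℕ}

lemma pow_apply_sub_mem_of_antitone (hD : Antitone D)
    (hφ : ∀ a, ∀ x ∈ D a, φ x - x ∈ D (a + t)) (k : ℕ) {a : ℕ} {x : M} (hx : x ∈ D a) :
    (φ ^ k) x - x ∈ D (a + t) := by
  induction k with
  | zero => simp
  | succ k ih =>
    have hk : (φ ^ k) x ∈ D a := by simpa using add_mem (hD (Nat.le_add_right a t) ih) hx
    rw [pow_succ', Module.End.mul_apply, ← sub_add_sub_cancel _ ((φ ^ k) x)]
    exact add_mem (hφ a _ hk) ih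

lemma aeval_prod_one_sub_X_pow_mem (hD : Antitone D)
    (hφ : ∀ a, ∀ x ∈ D a, φ x - x ∈ D (a + t)) (N : ℕ) {a : ℕ} {x : M} (hx : x ∈ D a) :
    aeval φ (∏ k ∈ Finset.range N, (1 - X ^ (k + 1)) : ℤ[X]) x ∈ D (a + N * t) := by
  induction N with
  | zero => simpa using hx
  | succ N ih =>
    have h := neg_mem (pow_apply_sub_mem_of_antitone hD hφ (N + 1) ih)
    rw [neg_sub] at h
    rw [Finset.prod_range_succ_comm, _root_.map_mul, Module.End.mul_apply, add_one_mul, ← add_assoc]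
    simpa using h

end Cyclotomic

section WittVector

variable {p n : ℕ} [Fact p.Prime] {R : Type*} [CommRing R]

lemma truncatedWittVector_coeff_add_zero (hn : 0 < n) (X Y : TruncatedWittVector p n R) :
    (X + Y).coeff ⟨0, hn⟩ = X.coeff ⟨0, hn⟩ + Y.coeff ⟨0, hn⟩ := by
  obtain ⟨X, rfl⟩ := WittVector.truncate_surjective p n R X
  obtain ⟨Y, rfl⟩ := WittVector.truncate_surjective p n R Y
  simp only [← map_add, WittVector.coeff_truncate, WittVector.add_coeff_zero]

lemma truncatedWittVector_coeff_prime_nsmul_succ [CharP R p] (X : TruncatedWittVector p n R)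
    {i : ℕ} (hi : i + 1 < n) : (p • X).coeff ⟨i + 1, hi⟩ = X.coeff ⟨i, by omega⟩ ^ p := by
  obtain ⟨X, rfl⟩ := WittVector.truncate_surjective p n R X
  rw [← map_nsmul, WittVector.coeff_truncate, WittVector.coeff_truncate, nsmul_eq_mul, mul_comm]
  exact WittVector.mul_charP_coeff_succ X i

section WittIdeal

/-- The ideal `ker (W_n(R) → W_m(R/I))` of the truncated Witt vectors whose first `m` components
lie in `I`. -/
def wittIdeal {m : ℕ} (hm : m ≤ n) (I : Ideal R) : Ideal (TruncatedWittVector p n R) :=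
  RingHom.ker ((TruncatedWittVector.map (Ideal.Quotient.mk I)).comp
    (TruncatedWittVector.truncate (p := p) hm))

variable {m : ℕ} {hm : m ≤ n} {I : Ideal R}

lemma sub_mem_wittIdeal_iff {X Y : TruncatedWittVector p n R} :
    X - Y ∈ wittIdeal hm I ↔
      ∀ i : Fin m, X.coeff (i.castLE hm) - Y.coeff (i.castLE hm) ∈ I := by
  simp only [wittIdeal, RingHom.mem_ker, map_sub, sub_eq_zero, TruncatedWittVector.ext_iff,
    RingHom.comp_apply, TruncatedWittVector.map_coeff, TruncatedWittVector.coeff_truncate,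
    Ideal.Quotient.eq]

lemma mem_wittIdeal_iff {X : TruncatedWittVector p n R} :
    X ∈ wittIdeal hm I ↔ ∀ i : Fin m, X.coeff (i.castLE hm) ∈ I := by
  simpa using sub_mem_wittIdeal_iff (hm := hm) (I := I) (X := X) (Y := 0)

lemma wittIdeal_mono : Monotone (wittIdeal (p := p) (R := R) hm) := fun _ _ hIJ _ hX ↦
  mem_wittIdeal_iff.mpr fun i ↦ hIJ (mem_wittIdeal_iff.mp hX i)

end WittIdeal

lemma tsub_div_le_ceilDiv {p : ℕ} (hp : 0 < p) (t d : ℕ) : t - d / p ≤ (p * t - d) ⌈/⌉ p := by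
  have h : p * t - d ≤ p * ((p * t - d) ⌈/⌉ p) := le_smul_ceilDiv (β := ℕ) hp
  rw [tsub_le_iff_left, ← tsub_le_iff_right, Nat.le_div_iff_mul_le hp, mul_comm, Nat.mul_sub]
  omega

variable [CharP R p] {J : ℕ → Ideal R} {t : ℕ} {f : R →+* R}

-- In `W_n(R)` the operator `∏ (1 - f ^ k)`, `1 ≤ k < p`, acts on the vector `X` of trace zero as
-- multiplication by `p`, that is, as Frobenius followed by the shift: a bound `t - d` for the first
-- components of `X` becomes the bound `(p * t - d) / p` for all of them but the last.
theorem coeff_mem_of_sum_map_pow_eq_zero (hJ : Antitone J) (hJ0 : J 0 = ⊤)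
    (hroot : ∀ a x, x ^ p ∈ J a → x ∈ J (a ⌈/⌉ p)) (hf : ∀ a, ∀ x ∈ J a, f x - x ∈ J (a + t))
    {X : TruncatedWittVector p n R}
    (hX : ∑ i ∈ Finset.range p, (TruncatedWittVector.map f ^ i) X = 0)
    (r i : ℕ) (hi : i + r < n) : X.coeff ⟨i, by omega⟩ ∈ J (t - t / p ^ r) := by
  induction r generalizing i with
  | zero => simp [hJ0]
  | succ r ih =>
    have hp : 0 < p := (Fact.out : p.Prime).pos
    have hmn : i + 2 ≤ n := by omega
    let φ : Module.End ℤ (TruncatedWittVector p n R) :=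
      (TruncatedWittVector.map f : _ →+* _).toIntAlgHom.toLinearMap
    let D a := (wittIdeal (p := p) hmn (J a)).toAddSubgroup
    have hD : Antitone D := fun a b hab ↦ wittIdeal_mono (hJ hab)
    have hφD a Y (hY : Y ∈ D a) : φ Y - Y ∈ D (a + t) := by
      refine sub_mem_wittIdeal_iff.mpr fun j ↦ ?_
      rw [show φ Y = TruncatedWittVector.map f Y from rfl, TruncatedWittVector.map_coeff]
      exact hf a _ (mem_wittIdeal_iff.mp hY j)
    have hXD : X ∈ D (t - t / p ^ r) := mem_wittIdeal_iff.mpr fun j ↦ ih j (by omega)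
    have hφ (k : ℕ) : (φ ^ k) X = (TruncatedWittVector.map f ^ k) X := by
      rw [Module.End.pow_apply, RingHom.coe_pow]; rfl
    have hpX : p • X ∈ D (t - t / p ^ r + (p - 1) * t) := by
      rw [prime_nsmul_eq_aeval_of_sum_pow_eq_zero (φ := φ) (by simpa only [hφ] using hX)]
      exact aeval_prod_one_sub_X_pow_mem hD hφD (p - 1) hXD
    have hdepth : t - t / p ^ r + (p - 1) * t = p * t - t / p ^ r := by
      have := Nat.div_le_self t (p ^ r)
      have := Nat.le_mul_of_pos_left t hp
      rw [Nat.sub_one_mul]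
      omega
    have hpow : X.coeff ⟨i, by omega⟩ ^ p ∈ J (p * t - t / p ^ r) := by
      rw [← truncatedWittVector_coeff_prime_nsmul_succ X hmn, ← hdepth]
      exact mem_wittIdeal_iff.mp hpX (Fin.last (i + 1))
    rw [pow_succ, ← Nat.div_div_eq_div_mul]
    exact hJ (tsub_div_le_ceilDiv hp t _) (hroot _ _ hpow)

end WittVector

section Cocycle

lemma cocycle_pow_eq_sum_pow {G A : Type*} [Monoid G] [NonAssocSemiring A] {ρ : G → A →+* A}
    {c : G → A} (hc1 : c 1 = 0) (hc : ∀ g h, c (g * h) = c g + ρ g (c h)) (g : G) (k : ℕ) :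
    c (g ^ k) = ∑ i ∈ Finset.range k, (ρ g ^ i) (c g) := by
  induction k with
  | zero => simpa using hc1
  | succ k ih =>
    rw [pow_succ', hc, ih, Finset.sum_range_succ', map_sum, add_comm]
    simp only [pow_succ', pow_zero]
    rfl

open groupCohomology in
lemma isCoboundary₁_of_isCocycle₁_of_aut {K L : Type*} [Field K] [Field L] [Algebra K L]
    [IsGalois K L] [FiniteDimensional K L] {c : (L ≃ₐ[K] L) → L} (hc : IsCocycle₁ c) :
    IsCoboundary₁ c := by
  obtain ⟨y, hy⟩ := Algebra.trace_surjective K L 1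
  have hsum : ∑ τ : L ≃ₐ[K] L, τ y = 1 := by
    rw [← trace_eq_sum_automorphisms, hy, _root_.map_one]
  refine ⟨-∑ τ, c τ * τ y, fun σ ↦ ?_⟩
  have hshift : ∑ τ : L ≃ₐ[K] L, (σ * τ) y = 1 :=
    (Equiv.sum_comp (Equiv.mulLeft σ) fun τ ↦ τ y).trans hsum
  have hσ : ∑ τ, c τ * τ y = σ (∑ τ, c τ * τ y) + c σ := calc
    ∑ τ, c τ * τ y = ∑ τ, c (σ * τ) * (σ * τ) y := (Equiv.sum_comp (Equiv.mulLeft σ) _).symm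
    _ = ∑ τ, (σ (c τ * τ y) + c σ * (σ * τ) y) := by
      simp only [hc σ, AlgEquiv.smul_def, add_mul, _root_.map_mul, AlgEquiv.mul_apply]
    _ = σ (∑ τ, c τ * τ y) + c σ := by
      rw [Finset.sum_add_distrib, ← Finset.mul_sum, ← map_sum, hshift, mul_one]
  rw [AlgEquiv.smul_def, map_neg]
  linear_combination hσ

end Cocycle

section Valuation

lemma nsmul_top {n : ℕ} (hn : n ≠ 0) : n • (⊤ : WithTop ℤ) = ⊤ := by
  obtain ⟨m, rfl⟩ := Nat.exists_eq_succ_of_ne_zero hn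
  rw [succ_nsmul, add_top]

lemma addValuation_sum_le {R Γ ι : Type*} [Ring R] [LinearOrderedAddCommMonoidWithTop Γ]
    {v : AddValuation R Γ} {S : Finset ι} {f : ι → R}
    (hf : ∀ i ∈ S, ∀ j ∈ S, v (f i) = v (f j) → v (f i) ≠ ⊤ → i = j) {i : ι} (hi : i ∈ S) :
    v (∑ j ∈ S, f j) ≤ v (f i) := by
  classical
  obtain ⟨m, hm, hmin⟩ := S.exists_min_image (fun j ↦ v (f j)) ⟨i, hi⟩
  refine le_trans ?_ (hmin i hi)
  by_cases htop : v (f m) = ⊤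
  · rw [htop]
    exact le_top
  · have hlt : v (f m) < v (∑ j ∈ S.erase m, f j) := by
      refine v.map_lt_sum htop fun j hj ↦ (hmin j (Finset.mem_of_mem_erase hj)).lt_of_ne fun h ↦ ?_
      exact Finset.ne_of_mem_erase hj (hf m hm j (Finset.mem_of_mem_erase hj) h htop).symm
    rw [← Finset.add_sum_erase S f hm, v.map_add_eq_of_lt_left hlt]

lemma addValuation_eq_zero_of_pow_eq_one {R : Type*} [Ring R] {v : AddValuation R (WithTop ℤ)}
    {x : R} {n : ℕ} (hn : n ≠ 0) (hx : x ^ n = 1) : v x = 0 := by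
  have h : n • v x = 0 := by rw [← v.map_pow, hx, v.map_one]
  have htop : v x ≠ ⊤ := fun hv ↦ by simp [hv, nsmul_top hn] at h
  lift v x to ℤ using htop with a
  norm_cast at h ⊢
  exact (smul_eq_zero.mp h).resolve_left hn

lemma addValuation_natCast_eq_zero {p : ℕ} [hp : Fact p.Prime] {R : Type*} [Ring R] [CharP R p]
    (v : AddValuation R (WithTop ℤ)) {j : ℕ} (hj : ¬ p ∣ j) : v (j : R) = 0 := by
  refine addValuation_eq_zero_of_pow_eq_one (Nat.sub_ne_zero_of_lt hp.out.one_lt) ?_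
  have h := congrArg (ZMod.castHom dvd_rfl R)
    (ZMod.pow_card_sub_one_eq_one (mt (ZMod.natCast_eq_zero_iff j p).mp hj))
  simpa only [map_pow, map_natCast, _root_.map_one] using h

section Unit

variable {R : Type*} [CommRing R] {v : AddValuation R (WithTop ℤ)} {u : R}

lemma le_addValuation_pow_sub_one (hu : v u = 0) (j : ℕ) : v (u - 1) ≤ v (u ^ j - 1) := by
  rw [← mul_geom_sum, v.map_mul]
  refine le_add_of_nonneg_right (v.map_le_sum fun i _ ↦ ?_)
  rw [v.map_pow, hu, smul_zero]

lemma addValuation_pow_sub_one (hu : v u = 0) (hu1 : 0 < v (u - 1)) {j : ℕ} (hj : v (j : R) = 0) :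
    v (u ^ j - 1) = v (u - 1) := by
  have hsum : ∑ i ∈ Finset.range j, u ^ i = (∑ i ∈ Finset.range j, (u ^ i - 1)) + (j : R) := by
    simp
  have hdiff : 0 < v (∑ i ∈ Finset.range j, (u ^ i - 1)) :=
    v.map_lt_sum (by simp) fun i _ ↦ hu1.trans_le (le_addValuation_pow_sub_one hu i)
  rw [← mul_geom_sum, v.map_mul, hsum, v.map_add_eq_of_lt_right (hj ▸ hdiff), hj,
    add_zero]

end Unit

section Expansion

variable {K L : Type*} [Field K] [Field L] [Algebra K L]
  {v : AddValuation L (WithTop ℤ)} {e : ℕ}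

lemma withTop_int_one_le_iff_pos {a : WithTop ℤ} : 1 ≤ a ↔ 0 < a := by
  cases a with
  | top => simp
  | coe a => norm_cast

lemma eq_of_nsmul_add_eq_nsmul_add {e i j : ℕ} (hi : i < e) (hj : j < e) {a b c : WithTop ℤ}
    (h : e • a + (c + i) = e • b + (c + j)) (htop : e • a + (c + i) ≠ ⊤) : i = j := by
  have he : e • (⊤ : WithTop ℤ) = ⊤ := nsmul_top (Nat.ne_zero_of_lt hi)
  have ha : a ≠ ⊤ := by rintro rfl; simp [he] at htop
  have hc : c ≠ ⊤ := by rintro rfl; simp at htop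
  have hb : b ≠ ⊤ := by rintro rfl; simp [h, he] at htop
  lift a to ℤ using ha
  lift b to ℤ using hb
  lift c to ℤ using hc
  norm_cast at h
  have hmod : (i : ℤ) ≡ j [ZMOD e] := Int.modEq_iff_dvd.mpr ⟨a - b, by
    simp only [nsmul_eq_mul] at h
    linear_combination -h⟩
  exact (Int.natCast_modEq_iff.mp hmod).eq_of_lt_of_lt hi hj

lemma addValuation_sum_smul_le (hram : ∀ x : K, ∃ a : WithTop ℤ, v (algebraMap K L x) = e • a)
    {S : Finset ℕ} (hS : S ⊆ Finset.range e) {x : ℕ → L} {c : WithTop ℤ}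
    (hx : ∀ j ∈ S, v (x j) = c + j) (k : ℕ → K) {i : ℕ} (hi : i ∈ S) :
    v (∑ j ∈ S, k j • x j) ≤ v (k i • x i) := by
  refine addValuation_sum_le (f := fun j ↦ k j • x j) (fun i hi j hj hij htop ↦ ?_) hi
  have hie := Finset.mem_range.mp (hS hi)
  have hje := Finset.mem_range.mp (hS hj)
  obtain ⟨a, ha⟩ := hram (k i)
  obtain ⟨b, hb⟩ := hram (k j)
  simp only [Algebra.smul_def, v.map_mul, ha, hb, hx i hi, hx j hj] at hij htop
  exact eq_of_nsmul_add_eq_nsmul_add hie hje hij htop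

variable {π : L}

lemma addValuation_sum_smul_pow_le (hram : ∀ x : K, ∃ a : WithTop ℤ, v (algebraMap K L x) = e • a)
    (hπ : v π = 1) {S : Finset ℕ} (hS : S ⊆ Finset.range e) (k : ℕ → K) {i : ℕ} (hi : i ∈ S) :
    v (∑ j ∈ S, k j • π ^ j) ≤ v (k i • π ^ i) :=
  addValuation_sum_smul_le hram hS (x := fun j ↦ π ^ j) (c := 0) (by simp [hπ]) k hi

variable [FiniteDimensional K L]
  (hram : ∀ x : K, ∃ a : WithTop ℤ, v (algebraMap K L x) = e • a)
  (hdeg : Module.finrank K L = e) (hπ : v π = 1)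
include hram hdeg hπ

lemma exists_eq_sum_smul_pow (y : L) : ∃ k : ℕ → K, y = ∑ j ∈ Finset.range e, k j • π ^ j := by
  have hind : LinearIndepOn K (fun j ↦ π ^ j) (Finset.range e : Set ℕ) := by
    refine linearIndepOn_finset_iff.mpr fun k hk i hi ↦ ?_
    have h := addValuation_sum_smul_pow_le hram hπ subset_rfl k hi
    rw [hk, v.map_zero, top_le_iff, v.top_iff, smul_eq_zero] at h
    exact h.resolve_right (pow_ne_zero i fun h0 ↦ by simp [h0] at hπ)
  have hspan : Submodule.span K ((fun j ↦ π ^ j) '' (Finset.range e : Set ℕ)) = ⊤ := by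
    rw [Set.image_eq_range]
    exact hind.span_eq_top_of_card_eq_finrank' (by simp [hdeg])
  obtain ⟨k, hk⟩ := (Submodule.mem_span_image_finset_iff_exists_fun' K).mp
    (hspan ▸ Submodule.mem_top : y ∈ _)
  exact ⟨k, hk.symm⟩

lemma exists_sub_algebraMap_eq_sum_smul_pow (y : L) :
    ∃ (a : K) (k : ℕ → K), v y ≤ v (y - algebraMap K L a) ∧
      y - algebraMap K L a = ∑ j ∈ Finset.Ico 1 e, k j • π ^ j := by
  have he : 0 < e := hdeg ▸ Module.finrank_pos
  obtain ⟨k, rfl⟩ := exists_eq_sum_smul_pow hram hdeg hπ y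
  refine ⟨k 0, k, v.map_le_sub le_rfl ?_, ?_⟩
  · simpa [Algebra.smul_def] using
      addValuation_sum_smul_pow_le hram hπ subset_rfl k (Finset.mem_range.mpr he)
  · rw [Finset.sum_range_eq_add_Ico _ he, pow_zero, Algebra.smul_def, mul_one, add_sub_cancel_left]

end Expansion

end Valuation

section Automorphism

variable {K L : Type*} [Field K] [Field L] [Algebra K L] {v : AddValuation L (WithTop ℤ)} {e : ℕ}
  {π u : L} {σ : L ≃ₐ[K] L}

lemma Ico_one_subset_range (e : ℕ) : Finset.Ico 1 e ⊆ Finset.range e := fun _ hi ↦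
  Finset.mem_range.mpr (Finset.mem_Ico.mp hi).2

lemma exists_apply_eq_unit_mul (hπ : v π = 1) (hσ : v (σ π) = v π) :
    ∃ u, σ π = u * π ∧ v u = 0 := by
  have hπ0 : π ≠ 0 := fun h ↦ by simp [h] at hπ
  have hmul : σ π = σ π / π * π := (div_mul_cancel₀ _ hπ0).symm
  refine ⟨σ π / π, hmul, WithTop.add_right_cancel WithTop.one_ne_top ?_⟩
  rw [← hπ, ← v.map_mul, ← hmul, hσ, zero_add]

lemma apply_sum_smul_pow_sub (hσ : σ π = u * π) (k : ℕ → K) (S : Finset ℕ) :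
    σ (∑ j ∈ S, k j • π ^ j) - ∑ j ∈ S, k j • π ^ j = ∑ j ∈ S, k j • ((u ^ j - 1) * π ^ j) := by
  simp only [map_sum, map_smul, map_pow, hσ, mul_pow, ← Finset.sum_sub_distrib, ← smul_sub,
    sub_one_mul]

section

variable (hram : ∀ x : K, ∃ a : WithTop ℤ, v (algebraMap K L x) = e • a) (hπ : v π = 1) {z : L}
  {k : ℕ → K} (hz : z = ∑ j ∈ Finset.Ico 1 e, k j • π ^ j)
include hram hπ hz

lemma one_le_addValuation_of_eq_sum_smul_pow (hz0 : 0 ≤ v z) : 1 ≤ v z := by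
  rw [hz] at hz0 ⊢
  refine v.map_le_sum fun j hj ↦ ?_
  have hk := hz0.trans (addValuation_sum_smul_pow_le hram hπ (Ico_one_subset_range e) k hj)
  obtain ⟨h1, he⟩ := Finset.mem_Ico.mp hj
  obtain ⟨a, ha⟩ := hram (k j)
  have hne : v (k j • π ^ j) ≠ 0 := fun h ↦ by
    have hj0 : j = 0 := eq_of_nsmul_add_eq_nsmul_add (a := a) (b := 0) (c := 0) he (by omega) ?_ ?_
    · omega
    all_goals simp_all [Algebra.smul_def]
  exact withTop_int_one_le_iff_pos.mpr (hk.lt_of_ne' hne)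

lemma add_le_addValuation_apply_sub_of_eq_sum_smul_pow (hσ : σ π = u * π) (hu : v u = 0) :
    v (u - 1) + v z ≤ v (σ z - z) := by
  rw [hz, apply_sum_smul_pow_sub hσ]
  refine v.map_le_sum fun j hj ↦ ?_
  rw [← mul_smul_comm, v.map_mul]
  exact add_le_add (le_addValuation_pow_sub_one hu j)
    (addValuation_sum_smul_pow_le hram hπ (Ico_one_subset_range e) k hj)

lemma addValuation_apply_sub_le_of_eq_sum_smul_pow [Fact e.Prime] [CharP L e] (hσ : σ π = u * π)
    (hu : v u = 0) (hu1 : 0 < v (u - 1)) : v (σ z - z) ≤ v (u - 1) + v z := by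
  have hpow : ∀ j ∈ Finset.Ico 1 e, v (u ^ j - 1) = v (u - 1) := fun j hj ↦
    addValuation_pow_sub_one hu hu1 <| addValuation_natCast_eq_zero (p := e) v <|
      Nat.not_dvd_of_pos_of_lt (Finset.mem_Ico.mp hj).1 (Finset.mem_Ico.mp hj).2
  rw [← v.map_mul, hz, apply_sum_smul_pow_sub hσ, Finset.mul_sum]
  refine v.map_le_sum fun i hi ↦ ?_
  have hx : ∀ j ∈ Finset.Ico 1 e, v ((u ^ j - 1) * π ^ j) = v (u - 1) + j := fun j hj ↦ by
    simp [hpow j hj, hπ]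
  calc v (∑ j ∈ Finset.Ico 1 e, k j • ((u ^ j - 1) * π ^ j))
    _ ≤ v (k i • ((u ^ i - 1) * π ^ i)) :=
      addValuation_sum_smul_le hram (Ico_one_subset_range e) hx k hi
    _ = v ((u - 1) * k i • π ^ i) := by
      rw [← mul_smul_comm, v.map_mul, v.map_mul, hpow i hi]

end

variable [FiniteDimensional K L] (hram : ∀ x : K, ∃ a : WithTop ℤ, v (algebraMap K L x) = e • a)
  (hdeg : Module.finrank K L = e) (hπ : v π = 1) (hσ : σ π = u * π) (hu : v u = 0)
include hram hdeg hπ hσ hu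

lemma add_le_addValuation_apply_sub (y : L) : v (u - 1) + v y ≤ v (σ y - y) := by
  obtain ⟨a, k, hy, hz⟩ := exists_sub_algebraMap_eq_sum_smul_pow hram hdeg hπ y
  have h := add_le_addValuation_apply_sub_of_eq_sum_smul_pow hram hπ hz hσ hu
  rw [map_sub σ, AlgEquiv.commutes, sub_sub_sub_cancel_right] at h
  exact (add_le_add_right hy _).trans h

lemma addValuation_apply_sub_le_of_integral {y : L} (hy : 0 ≤ v y) :
    v (σ π - π) ≤ v (σ y - y) := by
  obtain ⟨a, k, hya, hz⟩ := exists_sub_algebraMap_eq_sum_smul_pow hram hdeg hπ y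
  have hz1 := one_le_addValuation_of_eq_sum_smul_pow hram hπ hz (hy.trans hya)
  have h := add_le_addValuation_apply_sub_of_eq_sum_smul_pow hram hπ hz hσ hu
  rw [map_sub σ, AlgEquiv.commutes, sub_sub_sub_cancel_right] at h
  rw [hσ, ← sub_one_mul, v.map_mul, hπ]
  exact (add_le_add_right hz1 _).trans h

lemma exists_nonneg_addValuation_sub_algebraMap [Fact e.Prime] [CharP L e] (hu1 : 0 < v (u - 1))
    (hutop : v (u - 1) ≠ ⊤) {y : L} (hy : v (u - 1) ≤ v (σ y - y)) :
    ∃ a : K, 0 ≤ v (y - algebraMap K L a) := by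
  obtain ⟨a, k, -, hz⟩ := exists_sub_algebraMap_eq_sum_smul_pow hram hdeg hπ y
  have h := addValuation_apply_sub_le_of_eq_sum_smul_pow hram hπ hz hσ hu hu1
  rw [map_sub σ, AlgEquiv.commutes, sub_sub_sub_cancel_right] at h
  exact ⟨a, (WithTop.add_le_add_iff_left hutop).mp (by simpa using hy.trans h)⟩

lemma two_le_addValuation_pow_apply_sub (hinv : ∀ x, v (σ x) = v x) (j : ℕ) :
    2 ≤ v ((σ ^ j) π - u ^ j * π) := by
  induction j with
  | zero => simp
  | succ j ih =>
    have hu1 : 0 ≤ v (u - 1) := v.map_le_sub hu.ge v.map_one.ge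
    have hres : 1 ≤ v (σ (u ^ j) - u ^ j) := by
      refine le_trans ?_ (addValuation_apply_sub_le_of_integral hram hdeg hπ hσ hu (by simp [hu]))
      rw [hσ, ← sub_one_mul, v.map_mul, hπ]
      exact le_add_of_nonneg_left hu1
    have hsplit : (σ ^ (j + 1)) π - u ^ (j + 1) * π =
        σ ((σ ^ j) π - u ^ j * π) + (σ (u ^ j) - u ^ j) * (u * π) := by
      simp only [pow_succ', AlgEquiv.mul_apply, map_sub σ, _root_.map_mul σ, hσ]
      ring
    rw [hsplit]
    refine v.map_le_add (ih.trans_eq (hinv _).symm) ?_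
    rw [v.map_mul, v.map_mul, hu, hπ, zero_add, ← one_add_one_eq_two]
    exact add_le_add_left hres 1

-- `σ ^ e = 1` gives `u ^ e ≡ 1` modulo the maximal ideal, and in characteristic `e` this congruence
-- is `(u - 1) ^ e ≡ 0`.
lemma addValuation_sub_one_pos [Fact e.Prime] [CharP L e] (hinv : ∀ x, v (σ x) = v x)
    (hσe : σ ^ e = 1) : 0 < v (u - 1) := by
  have hpow : v (u ^ e - 1) = e • v (u - 1) := by rw [← v.map_pow, sub_pow_char, one_pow]
  have h := two_le_addValuation_pow_apply_sub hram hdeg hπ hσ hu hinv e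
  rw [hσe, AlgEquiv.one_apply, ← one_sub_mul, v.map_mul, hπ, v.map_sub_swap, hpow] at h
  refine (v.map_le_sub hu.ge v.map_one.ge).lt_of_ne fun h0 ↦ ?_
  rw [← h0, smul_zero, zero_add] at h
  exact absurd h (by decide)

omit hσ hu in
lemma exists_unit_addValuation_sub_one_eq [Fact e.Prime] [CharP L e]
    (hinv : ∀ x, v (σ x) = v x) (hσe : σ ^ e = 1) {s : ℕ} (hs : v (σ π - π) = s) :
    ∃ (u : L) (t : ℕ), σ π = u * π ∧ v u = 0 ∧ 0 < v (u - 1) ∧ v (u - 1) = t ∧ s = t + 1 := by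
  obtain ⟨u, hσ, hu⟩ := exists_apply_eq_unit_mul hπ (hinv π)
  have hpos := addValuation_sub_one_pos hram hdeg hπ hσ hu hinv hσe
  rw [hσ, ← sub_one_mul, v.map_mul, hπ] at hs
  have htop : v (u - 1) ≠ ⊤ := fun h ↦ by simp [h] at hs
  lift v (u - 1) to ℤ using htop with t ht
  lift t to ℕ using by exact_mod_cast hpos.le
  exact ⟨u, t, hσ, hu, ht ▸ hpos, ht.symm, by exact_mod_cast hs.symm⟩

end Automorphism

section Integers

variable {L : Type*} [CommRing L] {v : AddValuation L (WithTop ℤ)} {O : Subring L}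

/-- The ideal of the elements of valuation at least `a` of a subring of the valuation ring of `v`;
when the subring is the whole valuation ring and `v` is normalized, it is the `a`-th power of the
maximal ideal. -/
def valuationIdeal (hO : ∀ x ∈ O, 0 ≤ v x) (a : ℕ) : Ideal O where
  carrier := {x | (a : WithTop ℤ) ≤ v x}
  zero_mem' := by simp
  add_mem' hx hy := v.map_le_add hx hy
  smul_mem' x y hy := by
    have h : v y ≤ v (x * y) := by
      rw [v.map_mul]
      exact le_add_of_nonneg_left (hO x x.2)
    exact le_trans hy h

variable {hO : ∀ x ∈ O, 0 ≤ v x}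

lemma mem_valuationIdeal {a : ℕ} {x : O} :
    x ∈ valuationIdeal hO a ↔ (a : WithTop ℤ) ≤ v x := Iff.rfl

lemma valuationIdeal_antitone : Antitone (valuationIdeal hO) := fun _ _ hab _ hx ↦
  (Nat.cast_le.mpr hab).trans (mem_valuationIdeal.mp hx)

lemma valuationIdeal_zero : valuationIdeal hO 0 = ⊤ :=
  (Ideal.eq_top_iff_one _).mpr (by simp [mem_valuationIdeal])

lemma mem_valuationIdeal_ceilDiv_of_pow_mem {a p : ℕ} (hp : 0 < p) {x : O}
    (hx : x ^ p ∈ valuationIdeal hO a) : x ∈ valuationIdeal hO (a ⌈/⌉ p) := by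
  rw [mem_valuationIdeal, Subring.coe_pow, v.map_pow] at hx
  rw [mem_valuationIdeal]
  cases hv : v (x : L) with
  | top => exact le_top
  | coe b =>
    lift b to ℕ using (by have := hO x x.2; rw [hv] at this; exact_mod_cast this)
    rw [hv] at hx
    norm_cast at hx ⊢
    rw [nsmul_eq_mul] at hx
    exact (ceilDiv_le_iff_le_smul (β := ℕ) hp).mpr (by exact_mod_cast hx)

lemma le_addValuation_coeff_zero_of_sum_map_pow_eq_zero {p n t : ℕ} [hp : Fact p.Prime]
    [CharP L p] (hO : ∀ x ∈ O, 0 ≤ v x) {f : O →+* O}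
    (hf : ∀ x : O, (t : WithTop ℤ) + v x ≤ v (f x - x : L)) {X : TruncatedWittVector p n O}
    (hX : ∑ i ∈ Finset.range p, (TruncatedWittVector.map f ^ i) X = 0) (hn : 0 < n)
    (ht : t < p ^ (n - 1)) : (t : WithTop ℤ) ≤ v (X.coeff ⟨0, hn⟩ : O) := by
  have : CharP O p := (RingHom.charP_iff O.subtype Subtype.val_injective p).2 inferInstance
  have hfJ : ∀ a, ∀ x ∈ valuationIdeal hO a, f x - x ∈ valuationIdeal hO (a + t) := by
    intro a x hx
    rw [mem_valuationIdeal, add_comm, Nat.cast_add]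
    exact (add_le_add_right hx _).trans (hf x)
  have h := coeff_mem_of_sum_map_pow_eq_zero valuationIdeal_antitone valuationIdeal_zero
    (fun a x ↦ mem_valuationIdeal_ceilDiv_of_pow_mem hp.out.pos) hfJ hX (n - 1) 0 (by omega)
  rwa [Nat.div_eq_of_lt ht, tsub_zero, mem_valuationIdeal] at h

end Integers

section GaloisCohomology

variable {K L : Type*} [Field K] [Field L] [Algebra K L] {O : Subring L}
  {ρ : (L ≃ₐ[K] L) → O →+* O} (hρ : ∀ g x, (ρ g x : L) = g x)
include hρ

lemma sum_map_pow_eq_zero_of_cocycle {p n : ℕ} [Fact p.Prime]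
    {c : (L ≃ₐ[K] L) → TruncatedWittVector p n O}
    (hc : ∀ g h, c (g * h) = c g + TruncatedWittVector.map (ρ g) (c h)) {σ : L ≃ₐ[K] L}
    (hσ : σ ^ p = 1) : ∑ i ∈ Finset.range p, (TruncatedWittVector.map (ρ σ) ^ i) (c σ) = 0 := by
  have hid : TruncatedWittVector.map (ρ 1) (c 1) = c 1 := by
    ext i
    rw [TruncatedWittVector.map_coeff, hρ, AlgEquiv.one_apply]
  have hc1 : c 1 = 0 := by simpa [hid] using hc 1 1
  rw [← cocycle_pow_eq_sum_pow (ρ := fun g ↦ TruncatedWittVector.map (ρ g)) hc1 hc, hσ, hc1]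

lemma exists_integral_eq_apply_sub [IsGalois K L] [FiniteDimensional K L] {c : (L ≃ₐ[K] L) → O}
    (hc : ∀ g h, c (g * h) = c g + ρ g (c h)) {σ : L ≃ₐ[K] L}
    (hdescend : ∀ y : L, σ y - y = c σ → ∃ a : K, y - algebraMap K L a ∈ O) :
    ∃ b : O, ∀ g, c g = ρ g b - b := by
  obtain ⟨y, hy⟩ := isCoboundary₁_of_isCocycle₁_of_aut (K := K) (L := L) (c := fun g ↦ c g)
    fun g h ↦ by simp [hc, hρ, add_comm]
  obtain ⟨a, ha⟩ := hdescend y (hy σ)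
  refine ⟨⟨y - algebraMap K L a, ha⟩, fun g ↦ Subtype.ext ?_⟩
  simpa [hρ] using (hy g).symm

end GaloisCohomology

section RamificationBreak

/-- The additive valuation underlying a complete discrete valuation. -/
def toAddValuation {K : Type*} [Field K] (w : CompleteDiscreteValuation K) :
    AddValuation K (WithTop ℤ) :=
  AddValuation.of w.v w.v_zero w.map_one w.min_le_add w.map_mul

lemma exists_apply_sub_eq_of_isRamificationBreak {K L : Type*} [Field K] [Field L] [Algebra K L]
    [FiniteDimensional K L] {w : CompleteDiscreteValuation L} {e : ℕ}
    (hram : ∀ x : K, ∃ a : WithTop ℤ, w.v (algebraMap K L x) = e • a)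
    (hdeg : Module.finrank K L = e) (hinv : ∀ (σ : L ≃ₐ[K] L) x, w.v (σ x) = w.v x) {π : L}
    (hπ : w.v π = 1) {s : ℕ} (hs : IsRamificationBreak K w s) (hs1 : 1 ≤ s) :
    ∃ σ : L ≃ₐ[K] L, w.v (σ π - π) = s := by
  have hnot := hs.2 (s - 1) (Nat.sub_one_lt_of_lt hs1)
  simp only [FaithfulOnQuotient] at hnot
  push Not at hnot
  obtain ⟨σ, hσ1, hσ⟩ := hnot
  obtain ⟨x, hx, hxs⟩ := hs.1 σ hσ1
  obtain ⟨u, hu, hu0⟩ := exists_apply_eq_unit_mul (v := toAddValuation w) hπ (hinv σ π)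
  have hle : w.v (σ π - π) ≤ s :=
    (addValuation_apply_sub_le_of_integral (v := toAddValuation w) hram hdeg hπ hu hu0 hx).trans hxs
  have hlt := hσ π (hπ ▸ zero_le_one)
  refine ⟨σ, ?_⟩
  lift w.v (σ π - π) to ℤ using ne_top_of_le_ne_top (WithTop.natCast_ne_top s) hle with a
  norm_cast at hle hlt ⊢
  omega

lemma lt_pow_of_sub_one_lt_mul_geom_sum {p s m : ℕ} (hp : 0 < p)
    (h : (s : ℚ) - 1 < s * (p - 1) / p * ∑ j ∈ Finset.range m, (1 / p : ℚ) ^ j) : s < p ^ m := by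
  have hp0 : (p : ℚ) ≠ 0 := Nat.cast_ne_zero.mpr hp.ne'
  have hgeom : (s * (p - 1) / p : ℚ) * ∑ j ∈ Finset.range m, (1 / p : ℚ) ^ j = s - s / p ^ m :=
    calc
      _ = (s : ℚ) * ((1 - 1 / p) * ∑ j ∈ Finset.range m, (1 / p : ℚ) ^ j) := by field_simp
      _ = s - s / p ^ m := by rw [mul_neg_geom_sum, one_div_pow, mul_one_sub, mul_one_div]
  have hlt : (s : ℚ) / p ^ m < 1 := by linarith
  exact_mod_cast (div_lt_one (by positivity)).mp hlt

end RamificationBreak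

end H1Truncation

open H1Truncation in
theorem h1_truncation_map_zero_general (p : ℕ) [Fact p.Prime] {K L : Type*} [Field K] [Field L]
    [Algebra K L] [CharP K p] [IsGalois K L] [FiniteDimensional K L]
    (hdeg : Module.finrank K L = p) (v : AddValuation L (WithTop ℤ))
    (hram : ∀ x : K, ∃ a : WithTop ℤ, v (algebraMap K L x) = p • a)
    (π : L) (hπ : v π = 1) (σ : L ≃ₐ[K] L) (hσ : ∀ x, v (σ x) = v x)
    (s : ℕ) (hs : v (σ π - π) = s) (n : ℕ) (hn : 0 < n) (hsn : s ≤ p ^ (n - 1))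
    (O : Subring L) (hO : ∀ x, x ∈ O ↔ 0 ≤ v x)
    (ρ : (L ≃ₐ[K] L) → O →+* O) (hρ : ∀ g x, (ρ g x : L) = g x)
    (c : (L ≃ₐ[K] L) → TruncatedWittVector p n O)
    (hc : ∀ g h, c (g * h) = c g + TruncatedWittVector.map (ρ g) (c h)) :
    ∃ b : O, ∀ g, (c g).coeff ⟨0, hn⟩ = ρ g b - b := by
  have : CharP L p := charP_of_injective_algebraMap (algebraMap K L).injective p
  have hσp : σ ^ p = 1 := by rw [← hdeg, ← IsGalois.card_aut_eq_finrank, pow_card_eq_one']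
  obtain ⟨u, t, hσu, hu, hpos, ht, rfl⟩ :=
    exists_unit_addValuation_sub_one_eq hram hdeg hπ hσ hσp hs
  have hbound : (t : WithTop ℤ) ≤ v ((c σ).coeff ⟨0, hn⟩ : O) :=
    le_addValuation_coeff_zero_of_sum_map_pow_eq_zero (fun x ↦ (hO x).mp)
      (fun x ↦ by
        rw [hρ, ← ht]
        exact add_le_addValuation_apply_sub hram hdeg hπ hσu hu x)
      (sum_map_pow_eq_zero_of_cocycle hρ hc hσp) hn (by omega)
  refine exists_integral_eq_apply_sub hρ (fun g h ↦ ?_) (σ := σ) fun y hy ↦ ?_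
  · rw [hc, truncatedWittVector_coeff_add_zero, TruncatedWittVector.map_coeff]
  · obtain ⟨a, ha⟩ := exists_nonneg_addValuation_sub_algebraMap hram hdeg hπ hσu hu hpos
      (ht ▸ WithTop.coe_ne_top) (y := y) (by rw [hy, ht]; exact hbound)
    exact ⟨a, (hO _).mpr ha⟩

/-- Let `L/K` be a totally ramified Galois extension of degree `p` of
complete discrete valued fields of characteristic `p`, with ramification break `s ≥ 1`.
For `n ≥ 2` with `(s (p-1)/p) (1 + 1/p + ⋯ + 1/p^{n-3}) > s - 1`, the map
`H¹(G, Wₙ(O_L)) → H¹(G, O_L)` induced by projection to the first Witt component is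
zero: the first component of any `1`-cocycle with values in `Wₙ(O_L)` is a
`1`-coboundary with values in `O_L`. -/
theorem h1_truncation_map_zero
    (p : ℕ) [Fact p.Prime]
    {K L : Type*} [Field K] [Field L] [Algebra K L] [CharP K p]
    (wK : CompleteDiscreteValuation K) (wL : CompleteDiscreteValuation L)
    [IsGalois K L] [FiniteDimensional K L] (hdeg : Module.finrank K L = p)
    (htot : ∀ x : K, wL.v (algebraMap K L x) = p • wK.v x)
    (hGal : ∀ (σ : L ≃ₐ[K] L) (x : L), wL.v (σ x) = wL.v x)
    (s : ℕ) (hs : IsRamificationBreak K wL s) (hs1 : 1 ≤ s)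
    (n : ℕ) (hn : 2 ≤ n)
    (hbig : (s : ℚ) * ((p : ℚ) - 1) / (p : ℚ) *
        (∑ j ∈ Finset.range (n - 2), ((1 : ℚ) / (p : ℚ)) ^ j) > (s : ℚ) - 1) :
    ∀ c : (L ≃ₐ[K] L) → TruncatedWittVector p n wL.integers,
      (∀ σ τ : L ≃ₐ[K] L,
          c (σ * τ) = c σ + TruncatedWittVector.map (wL.galRes hGal σ) (c τ)) →
      ∃ b : wL.integers, ∀ σ : L ≃ₐ[K] L,
        (c σ).coeff ⟨0, by omega⟩ = wL.galRes hGal σ b - b := by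
  intro c hc
  obtain ⟨π, hπ⟩ := wL.surjective 1
  have hram (x : K) : ∃ a : WithTop ℤ, wL.v (algebraMap K L x) = p • a := ⟨wK.v x, htot x⟩
  obtain ⟨σ, hσ⟩ := H1Truncation.exists_apply_sub_eq_of_isRamificationBreak hram hdeg hGal hπ hs hs1
  have hp : 0 < p := (Fact.out : p.Prime).pos
  have hsn : s ≤ p ^ (n - 1) :=
    (H1Truncation.lt_pow_of_sub_one_lt_mul_geom_sum hp hbig).le.trans
      (Nat.pow_le_pow_right hp (by omega))
  exact h1_truncation_map_zero_general p hdeg (H1Truncation.toAddValuation wL) hram π hπ σ (hGal σ)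
    s hσ n (by omega) hsn wL.integers (fun _ ↦ Iff.rfl) (wL.galRes hGal) (fun _ _ ↦ rfl) c hc
end
end
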